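/- arXiv:2008.10016 — 2 statements merged into one kernel-verified Lean document; each statement's English description precedes it below -/
import Mathlib

section
/- Let V, W ⊆ S^5 be disjoint equivalent polybox codes with |V| ≤ 15. For every v ∈ V and every w ∈ W, if C_v ⊆ W and C_w ⊆ V are twin pair free minimal covers of v and of w respectively, then |C_v| < |V| or |C_w| < |V|. -/
/- Common framework: polybox codes over a finite alphabet `S` with a
complementation `c : S → S` (an involution without fixed points). -/

namespace PolyboxPaper

variable {S : Type} [Fintype S] [DecidableEq S] {d : ℕ}

/-- Two words are dichotomous: they differ by complementation at some position. -/
def Dich (c : S → S) (v w : Fin d → S) : Prop := ∃ i, v i = c (w i)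

instance (c : S → S) (v w : Fin d → S) : Decidable (Dich c v w) :=
  decidable_of_iff (∃ i, v i = c (w i)) Iff.rfl

/-- A polybox code: every two distinct words are dichotomous. -/
def IsCode (c : S → S) (V : Finset (Fin d → S)) : Prop :=
  ∀ v ∈ V, ∀ w ∈ V, v ≠ w → Dich c v w

/-- A cube tiling code: a polybox code with `2 ^ d` words. -/
def CubeTiling (c : S → S) (V : Finset (Fin d → S)) : Prop :=
  IsCode c V ∧ V.card = 2 ^ d

/-- `v` and `w` form a twin pair in the `i`-th direction. -/
def TwinPair (c : S → S) (v w : Fin d → S) (i : Fin d) : Prop :=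
  v i = c (w i) ∧ ∀ j, j ≠ i → v j = w j

/-- A code is twin pair free if no two of its words form a twin pair. -/
def TwinPairFree (c : S → S) (V : Finset (Fin d → S)) : Prop :=
  ∀ v ∈ V, ∀ w ∈ V, ∀ i, ¬ TwinPair c v w i

/-- A single glue-and-cut operation: a twin pair `v, w` of `V` in the `i`-th
direction is replaced by a twin pair `q, t` in the `i`-th direction agreeing
with `v` (and `w`) at all positions `j ≠ i`. -/
def GCStep (c : S → S) (V W : Finset (Fin d → S)) : Prop :=
  ∃ (v w q t : Fin d → S) (i : Fin d), v ∈ V ∧ w ∈ V ∧ TwinPair c v w i ∧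
    TwinPair c q t i ∧ (∀ j, j ≠ i → q j = v j) ∧ W = (V \ {v, w}) ∪ {q, t}

/-- `W` is obtained from `V` by gluing and cutting (finite, possibly empty,
sequence of single glue-and-cut operations); equivalently, `V` and `W` are
strongly equivalent. -/
def GC (c : S → S) (V W : Finset (Fin d → S)) : Prop :=
  Relation.ReflTransGen (GCStep c) V W

/-- Passing from `V` to `W` by gluing and cutting keeping `Q` fixed:
every intermediate code contains `Q`. -/
def GCFix (c : S → S) (Q V W : Finset (Fin d → S)) : Prop :=
  Relation.ReflTransGen (fun A B => GCStep c A B ∧ Q ⊆ B) V W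

/-- A realization: for each coordinate a map `f i : S → Set (X i)` taking
nonempty proper values and sending complementary letters to complementary sets. -/
def IsRealization (c : S → S) (X : Fin d → Type) (f : ∀ i, S → Set (X i)) : Prop :=
  ∀ i s, (f i s).Nonempty ∧ f i s ≠ Set.univ ∧ f i (c s) = (f i s)ᶜ

/-- The box associated to a word by a realization. -/
def box {X : Fin d → Type} (f : ∀ i, S → Set (X i)) (v : Fin d → S) :
    Set (∀ i, X i) :=
  {x | ∀ i, x i ∈ f i (v i)}

/-- The word `w` is covered by the code `V` (`w ⊑ V`). -/
def CoveredWord (c : S → S) (w : Fin d → S) (V : Finset (Fin d → S)) : Prop :=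
  ∀ (X : Fin d → Type) (f : ∀ i, S → Set (X i)), IsRealization c X f →
    box f w ⊆ ⋃ v ∈ V, box f v

/-- `V ⊑ W`: every word of `V` is covered by `W`. -/
def Covered (c : S → S) (V W : Finset (Fin d → S)) : Prop :=
  ∀ v ∈ V, CoveredWord c v W

/-- Equivalent codes: `V ⊑ W` and `W ⊑ V`. -/
def Equivalent (c : S → S) (V W : Finset (Fin d → S)) : Prop :=
  Covered c V W ∧ Covered c W V

/-- `V ⊑̇ W`: `V ⊑ W` and no word of `V` belongs to any code obtained from `W`
by gluing and cutting. -/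
def DotCovered (c : S → S) (V W : Finset (Fin d → S)) : Prop :=
  Covered c V W ∧ ∀ v ∈ V, ∀ W', GC c W W' → v ∉ W'

/-- The density `δ(V, W)`. -/
noncomputable def delta (c : S → S) (V W : Finset (Fin d → S)) : ℕ∞ :=
  W.inf fun w => ((V.filter fun v => ¬ Dich c v w).card : ℕ∞)

/-- `C` is a minimal cover of the word `w`. -/
def MinCoverWord (c : S → S) (C : Finset (Fin d → S)) (w : Fin d → S) : Prop :=
  IsCode c C ∧ CoveredWord c w C ∧ ∀ q ∈ C, ¬ Dich c q w

/-- `C` is a minimal cover of the code `P`. -/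
def MinCoverCode (c : S → S) (C P : Finset (Fin d → S)) : Prop :=
  IsCode c C ∧ Covered c P C ∧ ∀ q ∈ C, ∃ p ∈ P, ¬ Dich c q p

/-- A simple polybox code. -/
def SimpleCode (c : S → S) (V : Finset (Fin d → S)) : Prop :=
  ∀ i : Fin d, ∃ s : S, ∀ v ∈ V, v i = s ∨ v i = c s

/-- A simple cube tiling code `{s₁, s₁'} × ⋯ × {s_d, s_d'}`. -/
def SimpleCubeTiling (c : S → S) (U : Finset (Fin d → S)) : Prop :=
  ∃ s : Fin d → S, ∀ v : Fin d → S, v ∈ U ↔ ∀ i, v i = s i ∨ v i = c (s i)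

/-- Word whose first four coordinates are `x0 x1 x2 x3` and which agrees with
`r` elsewhere. -/
def specialWord (r : Fin d → S) (x0 x1 x2 x3 : S) : Fin d → S := fun i =>
  if (i : ℕ) = 0 then x0 else if (i : ℕ) = 1 then x1 else if (i : ℕ) = 2 then x2
  else if (i : ℕ) = 3 then x3 else r i

/-- The special pair of 12-word codes (Theorem 1 of the paper). -/
def SpecialPair (c : S → S) (V W : Finset (Fin d → S)) : Prop :=
  ∃ (a b : S) (r : Fin d → S), a ≠ b ∧ a ≠ c b ∧
    V = {specialWord r a (c a) b (c b), specialWord r a b (c b) a,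
         specialWord r a (c b) (c b) (c b), specialWord r (c a) a (c b) (c b),
         specialWord r (c a) (c a) a (c b), specialWord r (c a) b (c b) b,
         specialWord r b a b (c b), specialWord r b b b b,
         specialWord r b (c b) (c a) b, specialWord r (c b) a b (c a),
         specialWord r (c b) (c a) b b, specialWord r (c b) (c b) (c b) b} ∧
    W = {specialWord r (c a) (c a) (c a) b, specialWord r (c a) b a (c a),
         specialWord r b a (c a) a, specialWord r a (c a) (c a) a,
         specialWord r (c a) a (c a) (c a), specialWord r a b b (c a),
         specialWord r b b a a, specialWord r a (c b) (c a) (c a),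
         specialWord r (c b) a (c b) a, specialWord r (c b) (c a) a a,
         specialWord r (c b) (c b) a (c a), specialWord r b (c b) a (c b)}

/-- An isomorphism of `S^d`: a permutation of coordinates followed by
position bijections commuting with complementation. -/
def IsIso (c : S → S) (Φ : (Fin d → S) → Fin d → S) : Prop :=
  ∃ (σ : Equiv.Perm (Fin d)) (h : Fin d → S → S),
    (∀ i, Function.Bijective (h i)) ∧ (∀ i s, h i (c s) = c (h i s)) ∧
    ∀ v i, Φ v i = h i (v (σ i))

/-- The pair `(V, W)` is, up to isomorphism, the special pair. -/
def SpecialPairUpToIso (c : S → S) (V W : Finset (Fin d → S)) : Prop :=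
  ∃ Φ, IsIso c Φ ∧
    (SpecialPair c (V.image Φ) (W.image Φ) ∨ SpecialPair c (W.image Φ) (V.image Φ))


set_option linter.unusedSectionVars false
set_option linter.unusedFintypeInType false
set_option linter.unusedDecidableInType false

section Aux

variable {ι S : Type} [Fintype ι] [DecidableEq ι] [DecidableEq S]

/-- Product weight of a word on the coordinates in `J`. -/
def ev (J : Finset ι) (φ : ι → S → ℚ) (t : ι → S) : ℚ := ∏ j ∈ J, φ j (t j)

/-- Weight systems concentrated on the word `u`. -/
def Res (c : S → S) (J : Finset ι) (u : ι → S) (φ : ι → S → ℚ) : Prop :=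
  ∀ j ∈ J, φ j (u j) = 1 ∧ ∀ s, φ j s + φ j (c s) = 1

/-- `C` is a twin pair free nontrivial partition of the word `u` (on coordinates `J`). -/
structure Part (c : S → S) (J : Finset ι) (u : ι → S) (C : Finset (ι → S)) : Prop where
  nd : ∀ t ∈ C, ∀ j ∈ J, t j ≠ c (u j)
  sum : ∀ φ, Res c J u φ → ∑ t ∈ C, ev J φ t = 1
  code : ∀ t ∈ C, ∀ t₂ ∈ C, t ≠ t₂ → ∃ j ∈ J, t j = c (t₂ j)
  tf : ∀ t ∈ C, ∀ t₂ ∈ C, ∀ j ∈ J, t j = c (t₂ j) → (∀ k ∈ J, k ≠ j → t k = t₂ k) → False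
  nt : ∀ t ∈ C, ∃ j ∈ J, t j ≠ u j

/-- A one-coordinate weight. -/
def gw (c : S → S) (u x : S) : S → ℚ := fun s =>
  if s = u ∨ s = x then 1 else if s = c u ∨ s = c x then 0 else 1 / 2

lemma gw_u (c : S → S) (u x : S) : gw c u x u = 1 := by simp [gw]
lemma gw_x (c : S → S) (u x : S) : gw c u x x = 1 := by simp [gw]
lemma gw_nonneg (c : S → S) (u x s : S) : 0 ≤ gw c u x s := by
  unfold gw; split_ifs <;> norm_num
lemma gw_pos (c : S → S) (u x s : S) (h1 : s ≠ c u) (h2 : s ≠ c x) : 0 < gw c u x s := by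
  unfold gw; split_ifs <;> first | (norm_num; done) | tauto
lemma gw_half (c : S → S) (u s : S) (h1 : s ≠ u) (h2 : s ≠ c u) : gw c u u s = 1 / 2 := by
  unfold gw; simp [h1, h2]

variable {c : S → S}

lemma c_inj (hc : ∀ s, c (c s) = s) 
    {a b : S} (h : c a = c b) : a = b := by rw [← hc a, h, hc]

lemma gw_bal (hc : ∀ s, c (c s) = s) (hc' : ∀ s, c s ≠ s) 
    (u x : S) (h : x ≠ c u) (s : S) : gw c u x s + gw c u x (c s) = 1 := by
  have h1 := hc; have h2 := hc'
  unfold gw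
  split_ifs <;> first | (norm_num; done) | grind

lemma gw_cx (hc : ∀ s, c (c s) = s) (hc' : ∀ s, c s ≠ s) 
    (u x : S) (h : x ≠ c u) : gw c u x (c x) = 0 := by
  have := gw_bal hc hc' u x h x
  rw [gw_x] at this; linarith

lemma gw_diff (hc : ∀ s, c (c s) = s) (hc' : ∀ s, c s ≠ s) 
    (u s : S) (h : s ≠ u) (h' : s ≠ c u) (t : S) :
    gw c u s t - gw c u (c s) t = (if t = s then 1 else 0) - (if t = c s then 1 else 0) := by
  have h1 := hc; have h2 := hc'
  unfold gw
  split_ifs <;> first | (norm_num; done) | grind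

lemma ev_update (J : Finset ι) (i : ι) (hi : i ∈ J) (φ : ι → S → ℚ) (g : S → ℚ) (t : ι → S) :
    ev J (Function.update φ i g) t = g (t i) * ev (J.erase i) φ t := by
  unfold ev
  rw [← Finset.mul_prod_erase J _ hi]
  congr 1
  · simp
  · refine Finset.prod_congr rfl fun j hj => ?_
    rw [Function.update_of_ne (Finset.ne_of_mem_erase hj)]

lemma res_update {J : Finset ι} {u : ι → S} {φ : ι → S → ℚ} {i : ι} {g : S → ℚ}
    (h : Res c (J.erase i) u φ) (h1 : g (u i) = 1) (h2 : ∀ s, g s + g (c s) = 1) :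
    Res c J u (Function.update φ i g) := by
  intro j hj
  by_cases hji : j = i
  · subst hji; simpa using ⟨h1, h2⟩
  · simpa [Function.update_of_ne hji] using h j (Finset.mem_erase.2 ⟨hji, hj⟩)

lemma Part.slice (hc : ∀ s, c (c s) = s) (hc' : ∀ s, c s ≠ s) 
    {J : Finset ι} {u : ι → S} {C : Finset (ι → S)} (h : Part c J u C)
    {i : ι} (hi : i ∈ J) {s : S} (hs' : s ≠ c (u i))
    {φ : ι → S → ℚ} (hφ : Res c (J.erase i) u φ) :
    ∑ t ∈ C, gw c (u i) s (t i) * ev (J.erase i) φ t = 1 := by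
  rw [← h.sum _ (res_update hφ (gw_u c (u i) s) (gw_bal hc hc' (u i) s hs'))]
  exact Finset.sum_congr rfl fun t _ => (ev_update J i hi _ _ _).symm

lemma Part.deriv (hc : ∀ s, c (c s) = s) (hc' : ∀ s, c s ≠ s) 
    {J : Finset ι} {u : ι → S} {C : Finset (ι → S)} (h : Part c J u C)
    {i : ι} (hi : i ∈ J) {s : S} (hs : s ≠ u i) (hs' : s ≠ c (u i))
    {φ : ι → S → ℚ} (hφ : Res c (J.erase i) u φ) :
    ∑ t ∈ C with t i = s, ev (J.erase i) φ t = ∑ t ∈ C with t i = c s, ev (J.erase i) φ t := by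
  have h1 := h.slice hc hc' hi hs' hφ
  have h2 := h.slice hc hc' hi (s := c s) (fun e => hs (c_inj hc e)) hφ
  have h3 : ∑ t ∈ C, (gw c (u i) s (t i) - gw c (u i) (c s) (t i)) * ev (J.erase i) φ t = 0 := by
    simp_rw [sub_mul]; rw [Finset.sum_sub_distrib, h1, h2, sub_self]
  simp_rw [gw_diff hc hc' (u i) s hs hs', sub_mul, ite_mul, one_mul, zero_mul] at h3
  rw [Finset.sum_sub_distrib, ← Finset.sum_filter, ← Finset.sum_filter] at h3
  linarith

lemma Part.shrink (hc : ∀ s, c (c s) = s) (hc' : ∀ s, c s ≠ s) 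
    {J : Finset ι} {u : ι → S} {C : Finset (ι → S)} (h : Part c J u C)
    {i : ι} (hi : i ∈ J) {s : S} (hs : s ≠ u i) (hs' : s ≠ c (u i))
    {x : ι → S} (hx : C.filter (fun t => t i = s) = {x}) :
    ∃ J', J' ⊆ J.erase i ∧ Part c J' u (C.filter (fun t => t i = c s)) := by
  have hxm : x ∈ C.filter (fun t => t i = s) := by rw [hx]; simp
  obtain ⟨hxC, hxi⟩ := Finset.mem_filter.1 hxm
  have hd : ∀ φ, Res c (J.erase i) u φ →
      ev (J.erase i) φ x = ∑ t ∈ C with t i = c s, ev (J.erase i) φ t := by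
    intro φ hφ
    have := h.deriv hc hc' hi hs hs' hφ
    rwa [hx, Finset.sum_singleton] at this
  have key : ∀ t ∈ C.filter (fun t => t i = c s), ∀ j ∈ J.erase i, x j ≠ u j → t j = x j := by
    intro t ht j hj hxu
    by_contra hne
    have htC := (Finset.mem_filter.1 ht).1
    set φ : ι → S → ℚ := fun k => if k = j then gw c (u j) (c (x j)) else gw c (u k) (t k) with hφd
    have hφ : Res c (J.erase i) u φ := by
      intro k hk
      by_cases hkj : k = j
      · subst hkj
        simp only [hφd, if_true]
        exact ⟨gw_u _ _ _, gw_bal hc hc' _ _ fun e => hxu (c_inj hc e)⟩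
      · simp only [hφd, if_neg hkj]
        exact ⟨gw_u _ _ _, gw_bal hc hc' _ _ (h.nd t htC k (Finset.mem_of_mem_erase hk))⟩
    have e1 := hd φ hφ
    have e2 : ev (J.erase i) φ x = 0 := by
      refine Finset.prod_eq_zero hj ?_
      simp only [hφd, if_true]
      have := gw_cx hc hc' (u j) (c (x j)) fun e => hxu (c_inj hc e)
      rwa [hc] at this
    have nn : ∀ t', 0 ≤ ev (J.erase i) φ t' := by
      intro t'
      refine Finset.prod_nonneg fun k _ => ?_
      simp only [hφd]; split_ifs <;> exact gw_nonneg _ _ _ _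
    have e3 : 0 < ev (J.erase i) φ t := by
      refine Finset.prod_pos fun k hk => ?_
      by_cases hkj : k = j
      · subst hkj
        simp only [hφd, if_true]
        exact gw_pos _ _ _ _ (h.nd t htC k (Finset.mem_of_mem_erase hk)) (by rwa [hc])
      · simp only [hφd, if_neg hkj, gw_x]; norm_num
    have e4 := Finset.single_le_sum (f := fun t' => ev (J.erase i) φ t') (fun t' _ => nn t') ht
    linarith
  have hti : ∀ t ∈ C.filter (fun t => t i = c s), t ∈ C ∧ t i = c s := fun t ht =>
    Finset.mem_filter.1 ht
  set J' := (J.erase i).filter (fun j => x j = u j) with hJ'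
  have mJ' : ∀ j, j ∈ J' ↔ (j ≠ i ∧ j ∈ J) ∧ x j = u j := by
    intro j; simp [hJ', Finset.mem_filter, Finset.mem_erase]
  have agree : ∀ t ∈ C.filter (fun t => t i = c s), ∀ t₂ ∈ C.filter (fun t => t i = c s),
      ∀ j ∈ J, j ∉ J' → t j = t₂ j := by
    intro t ht t₂ ht₂ j hj hjJ
    by_cases hji : j = i
    · subst hji; rw [(hti t ht).2, (hti t₂ ht₂).2]
    · have hjE : j ∈ J.erase i := Finset.mem_erase.2 ⟨hji, hj⟩
      have hxu : x j ≠ u j := fun e => hjJ ((mJ' j).2 ⟨⟨hji, hj⟩, e⟩)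
      rw [key t ht j hjE hxu, key t₂ ht₂ j hjE hxu]
  refine ⟨J', Finset.filter_subset _ _, ?_, ?_, ?_, ?_, ?_⟩
  · intro t ht j hj
    exact h.nd t (hti t ht).1 j ((mJ' j).1 hj).1.2
  · intro φ hφ
    set φ' : ι → S → ℚ := fun j => if j ∈ J' then φ j else gw c (u j) (x j) with hφ'
    have hr : Res c (J.erase i) u φ' := by
      intro j hj
      by_cases hjJ : j ∈ J'
      · simp only [hφ', if_pos hjJ]; exact hφ j hjJ
      · simp only [hφ', if_neg hjJ]
        exact ⟨gw_u _ _ _, gw_bal hc hc' _ _ (h.nd x hxC j (Finset.mem_of_mem_erase hj))⟩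
    have e1 := hd φ' hr
    have e2 : ev (J.erase i) φ' x = 1 := by
      refine Finset.prod_eq_one fun j hj => ?_
      by_cases hjJ : j ∈ J'
      · simp only [hφ', if_pos hjJ]; rw [((mJ' j).1 hjJ).2]; exact (hφ j hjJ).1
      · simp only [hφ', if_neg hjJ]; exact gw_x _ _ _
    rw [← e2, e1]
    refine Finset.sum_congr rfl fun t ht => ?_
    unfold ev
    have hsubJ : J' ⊆ J.erase i := Finset.filter_subset _ _
    rw [← Finset.prod_subset hsubJ]
    · exact Finset.prod_congr rfl fun j hj => by simp only [hφ', if_pos hj]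
    · intro j hj hjJ
      have hxu : x j ≠ u j := fun e => hjJ ((mJ' j).2 ⟨Finset.mem_erase.1 hj, e⟩)
      simp only [hφ', if_neg hjJ]
      rw [key t ht j hj hxu]; exact gw_x _ _ _
  · intro t ht t₂ ht₂ hne
    obtain ⟨j, hj, e⟩ := h.code t (hti t ht).1 t₂ (hti t₂ ht₂).1 hne
    refine ⟨j, ?_, e⟩
    by_contra hjJ
    rw [agree t ht t₂ ht₂ j hj hjJ] at e
    exact hc' _ e.symm
  · intro t ht t₂ ht₂ j hj e hk
    refine h.tf t (hti t ht).1 t₂ (hti t₂ ht₂).1 j ((mJ' j).1 hj).1.2 e fun k hkJ hkj => ?_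
    by_cases hkJ' : k ∈ J'
    · exact hk k hkJ' hkj
    · exact agree t ht t₂ ht₂ k hkJ hkJ'
  · intro t ht
    by_contra hcon
    push Not at hcon
    refine h.tf t (hti t ht).1 x hxC i hi (by rw [(hti t ht).2, hxi]) fun k hk hki => ?_
    by_cases hkJ : k ∈ J'
    · rw [hcon k hkJ, ((mJ' k).1 hkJ).2]
    · exact key t ht k (Finset.mem_erase.2 ⟨hki, hk⟩)
        fun e => hkJ ((mJ' k).2 ⟨⟨hki, hk⟩, e⟩)

lemma Part.active (hc : ∀ s, c (c s) = s) (hc' : ∀ s, c s ≠ s) 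
    {J : Finset ι} {u : ι → S} {C : Finset (ι → S)} (h : Part c J u C)
    (IH : ∀ J' : Finset ι, J'.card < J.card → ∀ C', Part c J' u C' → 3 ≤ J'.card ∧ 5 ≤ C'.card)
    {i : ι} (hi : i ∈ J) {t : ι → S} (ht : t ∈ C) (hti : t i ≠ u i) :
    0 < (C.filter (fun x => x i = t i)).card ∧ 0 < (C.filter (fun x => x i = c (t i))).card ∧
    4 ≤ (C.filter (fun x => x i = t i)).card + (C.filter (fun x => x i = c (t i))).card ∧
    (J.card ≤ 3 → 2 ≤ (C.filter (fun x => x i = t i)).card ∧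
      2 ≤ (C.filter (fun x => x i = c (t i))).card) := by
  have hs' : t i ≠ c (u i) := h.nd t ht i hi
  have hm : t ∈ C.filter (fun x => x i = t i) := by simp [ht]
  have p1 : 0 < (C.filter (fun x => x i = t i)).card := Finset.card_pos.2 ⟨t, hm⟩
  have p2 : 0 < (C.filter (fun x => x i = c (t i))).card := by
    rw [Finset.card_pos]
    by_contra hemp
    rw [Finset.not_nonempty_iff_eq_empty] at hemp
    have hd := h.deriv hc hc' hi hti hs' (φ := fun k => gw c (u k) (t k)) (fun k hk =>
      ⟨gw_u _ _ _, gw_bal hc hc' _ _ (h.nd t ht k (Finset.mem_of_mem_erase hk))⟩)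
    rw [hemp, Finset.sum_empty] at hd
    have e4 := Finset.single_le_sum (f := fun t' => ev (J.erase i) (fun k => gw c (u k) (t k)) t')
      (fun t' _ => Finset.prod_nonneg fun k _ => gw_nonneg _ _ _ _) hm
    have e5 : ev (J.erase i) (fun k => gw c (u k) (t k)) t = 1 :=
      Finset.prod_eq_one fun k _ => gw_x _ _ _
    linarith
  have hE := Finset.card_erase_lt_of_mem hi
  have q1 : (C.filter (fun x => x i = t i)).card = 1 →
      4 ≤ J.card ∧ 5 ≤ (C.filter (fun x => x i = c (t i))).card := by
    intro h1
    obtain ⟨x, hx⟩ := Finset.card_eq_one.1 h1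
    obtain ⟨J', hJ', hP⟩ := h.shrink hc hc' hi hti hs' hx
    have := Finset.card_le_card hJ'
    have := IH J' (by omega) _ hP
    omega
  have q2 : (C.filter (fun x => x i = c (t i))).card = 1 →
      4 ≤ J.card ∧ 5 ≤ (C.filter (fun x => x i = t i)).card := by
    intro h1
    obtain ⟨x, hx⟩ := Finset.card_eq_one.1 h1
    obtain ⟨J', hJ', hP⟩ := h.shrink hc hc' hi (s := c (t i))
      (fun e => hs' (by rw [← e, hc])) (fun e => hti (c_inj hc e)) hx
    rw [hc] at hP
    have := Finset.card_le_card hJ'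
    have := IH J' (by omega) _ hP
    omega
  omega

lemma Part.bound_aux (hc : ∀ s, c (c s) = s) (hc' : ∀ s, c s ≠ s) 
    (u : ι → S) : ∀ n, ∀ J : Finset ι, J.card = n → ∀ C, Part c J u C →
    3 ≤ J.card ∧ 5 ≤ C.card := by
  intro n
  induction n using Nat.strong_induction_on with
  | _ n ihn =>
  intro J hJ C h
  have IH : ∀ J' : Finset ι, J'.card < J.card → ∀ C', Part c J' u C' →
      3 ≤ J'.card ∧ 5 ≤ C'.card := fun J' hJ' C' h' => ihn _ (by omega) J' rfl C' h'
  have hne : C.Nonempty := by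
    by_contra hemp
    rw [Finset.not_nonempty_iff_eq_empty] at hemp
    have := h.sum (fun k => gw c (u k) (u k)) fun k _ =>
      ⟨gw_u _ _ _, gw_bal hc hc' _ _ (hc' _).symm⟩
    simp [hemp] at this
  obtain ⟨t, ht⟩ := hne
  obtain ⟨i, hi, hti⟩ := h.nt t ht
  obtain ⟨p1, p2, p3, p4⟩ := h.active hc hc' IH hi ht hti
  have hE := Finset.card_erase_lt_of_mem hi
  set A := C.filter (fun x => x i = t i) with hA
  set B := C.filter (fun x => x i = c (t i)) with hB
  have hAB : Disjoint A B := by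
    rw [Finset.disjoint_left]
    intro x hx hx'
    have e1 := (Finset.mem_filter.1 hx).2
    have e2 := (Finset.mem_filter.1 hx').2
    exact hc' (t i) (by rw [← e2, e1])
  have hsub : A ∪ B ⊆ C := Finset.union_subset (Finset.filter_subset _ _) (Finset.filter_subset _ _)
  have hcu := Finset.card_union_of_disjoint hAB
  have hle := Finset.card_le_card hsub
  constructor
  · by_contra hlt
    have := (p4 (by omega)).1
    obtain ⟨x, hx, y, hy, hxy⟩ := Finset.one_lt_card.1 (by omega : 1 < A.card)
    obtain ⟨hxC, hxi⟩ := Finset.mem_filter.1 hx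
    obtain ⟨hyC, hyi⟩ := Finset.mem_filter.1 hy
    obtain ⟨j, hj, e⟩ := h.code x hxC y hyC hxy
    have hji : j ≠ i := by
      rintro rfl; rw [hxi, hyi] at e; exact hc' _ e.symm
    refine h.tf x hxC y hyC j hj e fun k hk hkj => ?_
    have : k = i := by
      by_contra hki
      have h3 : ({i, j, k} : Finset ι) ⊆ J := by
        intro z hz; simp at hz; rcases hz with rfl | rfl | rfl <;> assumption
      have h4 := Finset.card_le_card h3
      rw [Finset.card_eq_three.2 ⟨i, j, k, hji.symm, Ne.symm hki, Ne.symm hkj, rfl⟩] at h4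
      omega
    rw [this, hxi, hyi]
  · by_contra hlt
    have heq : A ∪ B = C := Finset.eq_of_subset_of_card_le hsub (by omega)
    have hlA : 2 ≤ A.card ∨ 2 ≤ B.card := by omega
    have gen : ∀ s, s ≠ u i → s ≠ c (u i) → (∀ x ∈ C, x i = s ∨ x i = c s) →
        2 ≤ (C.filter (fun x => x i = s)).card → 5 ≤ (C.filter (fun x => x i = s)).card := by
      intro s hs hs' hall h2
      refine (IH (J.erase i) hE _ ⟨?_, ?_, ?_, ?_, ?_⟩).2
      · intro x hx j hj
        exact h.nd x (Finset.mem_filter.1 hx).1 j (Finset.mem_of_mem_erase hj)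
      · intro φ hφ
        rw [← h.slice hc hc' hi hs' hφ, Finset.sum_filter]
        refine Finset.sum_congr rfl fun x hx => ?_
        rcases hall x hx with e | e
        · rw [e, gw_x]; simp
        · rw [e, gw_cx hc hc' _ _ hs']; simp [hc' s]
      · intro x hx y hy hxy
        obtain ⟨hxC, hxi⟩ := Finset.mem_filter.1 hx
        obtain ⟨hyC, hyi⟩ := Finset.mem_filter.1 hy
        obtain ⟨j, hj, e⟩ := h.code x hxC y hyC hxy
        refine ⟨j, Finset.mem_erase.2 ⟨?_, hj⟩, e⟩
        rintro rfl; rw [hxi, hyi] at e; exact hc' _ e.symm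
      · intro x hx y hy j hj e hk
        obtain ⟨hxC, hxi⟩ := Finset.mem_filter.1 hx
        obtain ⟨hyC, hyi⟩ := Finset.mem_filter.1 hy
        refine h.tf x hxC y hyC j (Finset.mem_of_mem_erase hj) e fun k hkJ hkj => ?_
        by_cases hki : k = i
        · rw [hki, hxi, hyi]
        · exact hk k (Finset.mem_erase.2 ⟨hki, hkJ⟩) hkj
      · intro x hx
        by_contra hcon
        push Not at hcon
        obtain ⟨y, hy, hyx⟩ := Finset.exists_mem_ne
          (by omega : 1 < (C.filter (fun x => x i = s)).card) x
        obtain ⟨hxC, hxi⟩ := Finset.mem_filter.1 hx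
        obtain ⟨hyC, hyi⟩ := Finset.mem_filter.1 hy
        obtain ⟨j, hj, e⟩ := h.code y hyC x hxC hyx
        have hji : j ≠ i := by
          rintro rfl; rw [hxi, hyi] at e; exact hc' _ e.symm
        rw [hcon j (Finset.mem_erase.2 ⟨hji, hj⟩)] at e
        exact h.nd y hyC j hj e
    have hs' : t i ≠ c (u i) := h.nd t ht i hi
    have hall : ∀ x ∈ C, x i = t i ∨ x i = c (t i) := by
      intro x hx
      rw [← heq, Finset.mem_union] at hx
      rcases hx with hx | hx
      · exact Or.inl (Finset.mem_filter.1 hx).2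
      · exact Or.inr (Finset.mem_filter.1 hx).2
    rcases hlA with h2 | h2
    · have := gen (t i) hti hs' hall h2
      change 5 ≤ A.card at this
      omega
    · have := gen (c (t i)) (fun e => hs' (by rw [← e, hc])) (fun e => hti (c_inj hc e))
        (fun x hx => by rw [hc]; exact (hall x hx).symm) h2
      change 5 ≤ B.card at this
      omega

lemma Part.bound (hc : ∀ s, c (c s) = s) (hc' : ∀ s, c s ≠ s) 
    {J : Finset ι} {u : ι → S} {C : Finset (ι → S)} (h : Part c J u C) :
    3 ≤ J.card ∧ 5 ≤ C.card := Part.bound_aux hc hc' u _ J rfl C h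

lemma Part.restrict {J : Finset ι} {u : ι → S} {C : Finset (ι → S)} (h : Part c J u C)
    (hc : ∀ s, c (c s) = s) (hc' : ∀ s, c s ≠ s) :
    Part c (J.filter (fun j => ∃ t ∈ C, t j ≠ u j)) u C := by
  set A := J.filter (fun j => ∃ t ∈ C, t j ≠ u j) with hA
  have hAJ : A ⊆ J := Finset.filter_subset _ _
  have off : ∀ t ∈ C, ∀ j ∈ J, j ∉ A → t j = u j := by
    intro t ht j hj hjA
    by_contra hne
    exact hjA (Finset.mem_filter.2 ⟨hj, t, ht, hne⟩)
  refine ⟨fun t ht j hj => h.nd t ht j (hAJ hj), ?_, ?_, ?_, ?_⟩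
  · intro φ hφ
    set φ' : ι → S → ℚ := fun j => if j ∈ A then φ j else gw c (u j) (u j) with hφ'
    rw [← h.sum φ' ?_]
    · refine Finset.sum_congr rfl fun t ht => ?_
      unfold ev
      rw [← Finset.prod_subset hAJ]
      · exact Finset.prod_congr rfl fun j hj => by simp only [hφ', if_pos hj]
      · intro j hj hjA
        simp only [hφ', if_neg hjA]
        rw [off t ht j hj hjA]; exact gw_u _ _ _
    · intro j hj
      by_cases hjA : j ∈ A
      · simp only [hφ', if_pos hjA]; exact hφ j hjA
      · simp only [hφ', if_neg hjA]
        exact ⟨gw_u _ _ _, gw_bal hc hc' _ _ (hc' _).symm⟩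
  · intro t ht t₂ ht₂ hne
    obtain ⟨j, hj, e⟩ := h.code t ht t₂ ht₂ hne
    refine ⟨j, ?_, e⟩
    by_contra hjA
    rw [off t ht j hj hjA, off t₂ ht₂ j hj hjA] at e
    exact hc' _ e.symm
  · intro t ht t₂ ht₂ j hj e hk
    refine h.tf t ht t₂ ht₂ j (hAJ hj) e fun k hkJ hkj => ?_
    by_cases hkA : k ∈ A
    · exact hk k hkA hkj
    · rw [off t ht k hkJ hkA, off t₂ ht₂ k hkJ hkA]
  · intro t ht
    obtain ⟨j, hj, e⟩ := h.nt t ht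
    exact ⟨j, Finset.mem_filter.2 ⟨hj, t, ht, e⟩, e⟩

/-- Equality of all balanced evaluations on the coordinates `J`. -/
def EqE (c : S → S) (J : Finset ι) (T U : Finset (ι → S)) : Prop :=
  ∀ φ : ι → S → ℚ, (∀ j ∈ J, ∃ τ, ∀ s, φ j s + φ j (c s) = τ) →
    ∑ t ∈ T, ev J φ t = ∑ t ∈ U, ev J φ t

/-- Code on the coordinates `J`. -/
def CodeOn (c : S → S) (J : Finset ι) (T : Finset (ι → S)) : Prop :=
  ∀ t ∈ T, ∀ t₂ ∈ T, t ≠ t₂ → ∃ j ∈ J, t j = c (t₂ j)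

/-- Twin pair free on the coordinates `J`. -/
def TFOn (c : S → S) (J : Finset ι) (T : Finset (ι → S)) : Prop :=
  ∀ t ∈ T, ∀ t₂ ∈ T, ∀ j ∈ J, t j = c (t₂ j) → (∀ k ∈ J, k ≠ j → t k = t₂ k) → False

/-- The words of `T` that are not dichotomous to `u` on `J`. -/
def cov (c : S → S) (J : Finset ι) (T : Finset (ι → S)) (u : ι → S) : Finset (ι → S) :=
  T.filter (fun t => ∀ j ∈ J, t j ≠ c (u j))

/-- Derivative in direction `i` with respect to the letter `s`. -/
lemma EqE.deriv (hc : ∀ s, c (c s) = s) (hc' : ∀ s, c s ≠ s) {J : Finset ι}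
    {T U : Finset (ι → S)} (h : EqE c J T U) {i : ι} (hi : i ∈ J) (s : S)
    (φ : ι → S → ℚ) (hφ : ∀ j ∈ J.erase i, ∃ τ, ∀ s, φ j s + φ j (c s) = τ) :
    ∑ t ∈ T with t i = s, ev (J.erase i) φ t - ∑ t ∈ T with t i = c s, ev (J.erase i) φ t =
    ∑ t ∈ U with t i = s, ev (J.erase i) φ t - ∑ t ∈ U with t i = c s, ev (J.erase i) φ t := by
  have := h (Function.update φ i fun x => (if x = s then 1 else 0) - (if x = c s then 1 else 0)) ?_
  · simp_rw [ev_update J i hi, sub_mul, ite_mul, one_mul, zero_mul] at this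
    simp_rw [Finset.sum_sub_distrib, ← Finset.sum_filter] at this
    exact this
  · intro j hj
    by_cases hji : j = i
    · subst hji
      refine ⟨0, fun x => ?_⟩
      simp only [Function.update_self]
      have h1 := hc; have h2 := hc'
      split_ifs <;> first | (norm_num; done) | grind
    · simpa [Function.update_of_ne hji] using hφ j (Finset.mem_erase.2 ⟨hji, hj⟩)

lemma cov_part (hc : ∀ s, c (c s) = s) {J : Finset ι}
    {T U : Finset (ι → S)} (h : EqE c J T U) (hT : CodeOn c J T) (hU : CodeOn c J U)
    (tf : TFOn c J T) (hd : ∀ t ∈ T, ∀ u ∈ U, ∃ j ∈ J, t j ≠ u j) {u : ι → S} (hu : u ∈ U) :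
    Part c J u (cov c J T u) := by
  have hm : ∀ t ∈ cov c J T u, t ∈ T ∧ ∀ j ∈ J, t j ≠ c (u j) := fun t ht => Finset.mem_filter.1 ht
  refine ⟨fun t ht => (hm t ht).2, ?_, fun t ht t₂ ht₂ => hT t (hm t ht).1 t₂ (hm t₂ ht₂).1,
    fun t ht t₂ ht₂ => tf t (hm t ht).1 t₂ (hm t₂ ht₂).1, fun t ht => hd t (hm t ht).1 u hu⟩
  intro φ hφ
  have hz : ∀ j ∈ J, φ j (c (u j)) = 0 := by
    intro j hj
    have h1 := hφ j hj
    have h2 := h1.2 (u j)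
    linarith [h1.1]
  have e1 : ∑ t ∈ U, ev J φ t = 1 := by
    rw [Finset.sum_eq_single_of_mem u hu]
    · exact Finset.prod_eq_one fun j hj => (hφ j hj).1
    · intro t ht hne
      obtain ⟨j, hj, e⟩ := hU t ht u hu hne
      exact Finset.prod_eq_zero hj (by rw [e]; exact hz j hj)
  rw [← e1, ← h φ fun j hj => ⟨1, (hφ j hj).2⟩]
  refine Finset.sum_subset (Finset.filter_subset _ _) fun t ht hn => ?_
  have : ∃ j ∈ J, t j = c (u j) := by
    by_contra hcon
    push Not at hcon
    exact hn (Finset.mem_filter.2 ⟨ht, hcon⟩)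
  obtain ⟨j, hj, e⟩ := this
  exact Finset.prod_eq_zero hj (by rw [e]; exact hz j hj)

lemma two_letters (hc' : ∀ s, c s ≠ s) (T : Finset (ι → S)) (i : ι) (s : S) :
    (T.filter (fun x => x i = s)).card + (T.filter (fun x => x i = c s)).card =
      (T.filter (fun x => x i = s ∨ x i = c s)).card := by
  rw [Finset.filter_or, Finset.card_union_of_disjoint]
  rw [Finset.disjoint_left]
  intro x hx hx'
  have e1 := (Finset.mem_filter.1 hx).2
  have e2 := (Finset.mem_filter.1 hx').2
  exact hc' s (by rw [← e2, e1])

lemma card_filter_add_le (T : Finset (ι → S)) (p q : (ι → S) → Prop) [DecidablePred p]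
    [DecidablePred q] (h : ∀ x ∈ T, p x → ¬ q x) :
    (T.filter p).card + (T.filter q).card ≤ T.card := by
  rw [← Finset.card_union_of_disjoint]
  · exact Finset.card_le_card (Finset.union_subset (Finset.filter_subset _ _) (Finset.filter_subset _ _))
  · rw [Finset.disjoint_left]
    intro x hx hx'
    exact h x (Finset.mem_filter.1 hx).1 (Finset.mem_filter.1 hx).2 (Finset.mem_filter.1 hx').2

/-- Two disjoint equivalent codes, one of them twin pair free, in dimension at most four
have at least eight words. -/
theorem eight_le (hc : ∀ s, c (c s) = s) (hc' : ∀ s, c s ≠ s) {J : Finset ι} (hJ : J.card ≤ 4)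
    {T U : Finset (ι → S)} (h : EqE c J T U) (hT : CodeOn c J T) (hU : CodeOn c J U)
    (tf : TFOn c J T) (hd : ∀ t ∈ T, ∀ u ∈ U, ∃ j ∈ J, t j ≠ u j) (hne : U.Nonempty) :
    8 ≤ T.card := by
  by_contra hlt
  have hlt : T.card ≤ 7 := by omega
  let A : (ι → S) → Finset ι := fun u => J.filter (fun j => ∃ t ∈ cov c J T u, t j ≠ u j)
  have hP : ∀ u ∈ U, Part c (A u) u (cov c J T u) := fun u hu =>
    (cov_part hc h hT hU tf hd hu).restrict hc hc'
  have hcT : ∀ u, cov c J T u ⊆ T := fun u => Finset.filter_subset _ _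
  -- active letters
  have act : ∀ u ∈ U, ∀ i ∈ A u, ∃ s, s ≠ u i ∧ s ≠ c (u i) ∧
      0 < (T.filter (fun x => x i = s)).card ∧ 0 < (T.filter (fun x => x i = c s)).card ∧
      4 ≤ (T.filter (fun x => x i = s)).card + (T.filter (fun x => x i = c s)).card ∧
      ((A u).card ≤ 3 → 2 ≤ (T.filter (fun x => x i = s)).card ∧
        2 ≤ (T.filter (fun x => x i = c s)).card) := by
    intro u hu i hi
    obtain ⟨hiJ, t, ht, hti⟩ := Finset.mem_filter.1 hi
    obtain ⟨a1, a2, a3, a4⟩ := (hP u hu).active hc hc'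
      (fun J' _ C' hp => hp.bound hc hc') hi ht hti
    have m1 := Finset.card_le_card (Finset.filter_subset_filter (fun x => x i = t i) (hcT u))
    have m2 := Finset.card_le_card (Finset.filter_subset_filter (fun x => x i = c (t i)) (hcT u))
    refine ⟨t i, hti, (hP u hu).nd t ht i hi, by omega, by omega, by omega, fun h3 => ?_⟩
    have := a4 h3
    omega
  -- step 1
  have step1 : ∀ i ∈ J, ∃ u ∈ U, i ∉ A u := by
    intro i hi
    by_contra hcon
    push Not at hcon
    obtain ⟨u₀, hu₀⟩ := hne
    obtain ⟨s, hs1, hs2, hp1, hp2, h4, -⟩ := act u₀ hu₀ i (hcon u₀ hu₀)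
    have hUs : ∀ u ∈ U, u i ≠ s ∧ u i ≠ c s := by
      intro u hu
      obtain ⟨r, hr1, hr2, -, -, h4', -⟩ := act u hu i (hcon u hu)
      by_contra hx
      have hx : u i = s ∨ u i = c s := by tauto
      rw [two_letters hc'] at h4 h4'
      have := card_filter_add_le T (fun x => x i = s ∨ x i = c s) (fun x => x i = r ∨ x i = c r)
        (by grind)
      omega
    have hE : EqE c (J.erase i) (T.filter (fun x => x i = s)) (T.filter (fun x => x i = c s)) := by
      intro φ hφ
      have e := h.deriv hc hc' hi s φ hφ
      rw [Finset.filter_eq_empty_iff.2 (fun u hu => (hUs u hu).1),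
        Finset.filter_eq_empty_iff.2 (fun u hu => (hUs u hu).2)] at e
      simp only [Finset.sum_empty, sub_self] at e
      linarith
    have inh : ∀ r, CodeOn c (J.erase i) (T.filter (fun x => x i = r)) ∧
        TFOn c (J.erase i) (T.filter (fun x => x i = r)) := by
      intro r
      constructor
      · intro x hx y hy hxy
        obtain ⟨hxC, hxi⟩ := Finset.mem_filter.1 hx
        obtain ⟨hyC, hyi⟩ := Finset.mem_filter.1 hy
        obtain ⟨j, hj, e⟩ := hT x hxC y hyC hxy
        refine ⟨j, Finset.mem_erase.2 ⟨?_, hj⟩, e⟩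
        rintro rfl; rw [hxi, hyi] at e; exact hc' _ e.symm
      · intro x hx y hy j hj e hk
        obtain ⟨hxC, hxi⟩ := Finset.mem_filter.1 hx
        obtain ⟨hyC, hyi⟩ := Finset.mem_filter.1 hy
        refine tf x hxC y hyC j (Finset.mem_of_mem_erase hj) e fun k hkJ hkj => ?_
        by_cases hki : k = i
        · rw [hki, hxi, hyi]
        · exact hk k (Finset.mem_erase.2 ⟨hki, hkJ⟩) hkj
    have dis : ∀ x ∈ T.filter (fun x => x i = s), ∀ y ∈ T.filter (fun x => x i = c s),
        ∃ j ∈ J.erase i, x j ≠ y j := by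
      intro x hx y hy
      obtain ⟨hxC, hxi⟩ := Finset.mem_filter.1 hx
      obtain ⟨hyC, hyi⟩ := Finset.mem_filter.1 hy
      by_contra hcon
      push Not at hcon
      exact tf x hxC y hyC i hi (by rw [hxi, hyi, hc]) fun k hk hki =>
        hcon k (Finset.mem_erase.2 ⟨hki, hk⟩)
    obtain ⟨x, hx⟩ := Finset.card_pos.1 hp1
    obtain ⟨y, hy⟩ := Finset.card_pos.1 hp2
    have b1 := ((cov_part hc hE (inh _).1 (inh _).1 (inh _).2 dis hy).bound hc hc').2
    have b2 := ((cov_part hc (fun φ hφ => (hE φ hφ).symm) (inh _).1 (inh _).1 (inh _).2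
      (fun y hy x hx => by
        obtain ⟨j, hj, e⟩ := dis x hx y hy
        exact ⟨j, hj, e.symm⟩) hx).bound hc hc').2
    have b3 := b1.trans (Finset.card_le_card (Finset.filter_subset _ _))
    have b4 := b2.trans (Finset.card_le_card (Finset.filter_subset _ _))
    have := card_filter_add_le T (fun x => x i = s) (fun x => x i = c s) (by grind)
    omega
  have hA3 : ∀ u ∈ U, 3 ≤ (A u).card ∧ 5 ≤ (cov c J T u).card := fun u hu =>
    (hP u hu).bound hc hc'
  have hAJ : ∀ u, A u ⊆ J := fun u => Finset.filter_subset _ _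
  -- words with exactly three active coordinates
  have step2 : ∀ i ∈ J, ∃ u ∈ U, A u = J.erase i ∧ (A u).card = 3 := by
    intro i hi
    obtain ⟨u, hu, hiu⟩ := step1 i hi
    have hsub : A u ⊆ J.erase i := fun j hj =>
      Finset.mem_erase.2 ⟨fun e => hiu (e ▸ hj), hAJ u hj⟩
    have h3 := (hA3 u hu).1
    have hE := Finset.card_erase_of_mem hi
    have hl := Finset.card_le_card hsub
    exact ⟨u, hu, Finset.eq_of_subset_of_card_le hsub (by omega), by omega⟩
  have step3 : ∀ i ∈ J, ∀ k ∈ J, i ≠ k → ∀ u ∈ U, A u = J.erase k → (A u).card = 3 →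
      ∀ t ∈ T, t i ≠ u i := by
    intro i hi k hk hik u hu hAu hAc
    obtain ⟨v, hv, hAv, hAvc⟩ := step2 i hi
    obtain ⟨s, hs1, hs2, -, -, h4, h22⟩ := act u hu i (by rw [hAu]; exact Finset.mem_erase.2 ⟨hik, hi⟩)
    have h22 := h22 (by omega)
    have hsubr : cov c J T v ⊆ T.filter (fun x => x i = v i) := by
      intro t ht
      refine Finset.mem_filter.2 ⟨hcT v ht, ?_⟩
      by_contra hne
      have : i ∈ A v := Finset.mem_filter.2 ⟨hi, t, ht, hne⟩
      rw [hAv] at this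
      exact (Finset.mem_erase.1 this).1 rfl
    have h5 := (hA3 v hv).2.trans (Finset.card_le_card hsubr)
    have hr : v i = s ∨ v i = c s := by
      by_contra hno
      rw [two_letters hc'] at h4
      have := card_filter_add_le T (fun x => x i = v i) (fun x => x i = s ∨ x i = c s) (by grind)
      omega
    have h7 : 7 ≤ (T.filter (fun x => x i = s ∨ x i = c s)).card := by
      rw [← two_letters hc']
      rcases hr with e | e <;> rw [e] at h5 <;> omega
    have hall := Finset.eq_of_subset_of_card_le
      (Finset.filter_subset (fun x => x i = s ∨ x i = c s) T) (by omega)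
    intro t ht e
    rw [← hall] at ht
    rcases (Finset.mem_filter.1 ht).2 with e' | e'
    · exact hs1 (by rw [← e, e'])
    · exact hs2 (by rw [← e, e', hc])
  obtain ⟨u₀, hu₀⟩ := hne
  obtain ⟨k, hk⟩ := Finset.card_pos.1 (by have := (hA3 u₀ hu₀).1; omega : 0 < (A u₀).card)
  have hk := hAJ _ hk
  obtain ⟨u, hu, hAu, hAc⟩ := step2 k hk
  have hs := (hP u hu).sum (fun j => gw c (u j) (u j)) fun j _ =>
    ⟨gw_u _ _ _, gw_bal hc hc' _ _ (hc' _).symm⟩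
  have hv : ∀ t ∈ cov c J T u, ev (A u) (fun j => gw c (u j) (u j)) t = 1 / 8 := by
    intro t ht
    unfold ev
    rw [Finset.prod_congr rfl (g := fun _ => (1 / 2 : ℚ)), Finset.prod_const, hAc]
    · norm_num
    · intro j hj
      have hj' := hj
      rw [hAu, Finset.mem_erase] at hj'
      exact gw_half _ _ _ (step3 j hj'.2 k hk hj'.1 u hu hAu hAc t (hcT u ht))
        ((hP u hu).nd t ht j hj)
  rw [Finset.sum_congr rfl hv, Finset.sum_const, nsmul_eq_mul] at hs
  have h8 : ((cov c J T u).card : ℚ) = 8 := by linarith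
  have h8' : (cov c J T u).card = 8 := by exact_mod_cast h8
  have := Finset.card_le_card (hcT u)
  omega

/-- Selectors: exactly one of two complementary letters is chosen. -/
def IsSel (c : S → S) (x : S → Bool) : Prop := ∀ s, x (c s) = !(x s)

lemma exists_sel [Fintype S] (hc : ∀ s, c (c s) = s) (hc' : ∀ s, c s ≠ s) :
    ∃ x : S → Bool, IsSel c x := by
  refine ⟨fun s => decide (Fintype.equivFin S s < Fintype.equivFin S (c s)), fun s => ?_⟩
  have hne : Fintype.equivFin S s ≠ Fintype.equivFin S (c s) :=
    fun e => hc' s ((Fintype.equivFin S).injective e).symm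
  simp only [hc]
  rcases lt_or_gt_of_ne hne with h | h
  · simp [h, h.le]
  · simp [h, h.le]

/-- Force the letter `a` in a selector. -/
def updSel (c : S → S) (x : S → Bool) (a : S) : S → Bool := fun t =>
  if t = a then true else if t = c a then false else x t

lemma updSel_sel (hc : ∀ s, c (c s) = s) (hc' : ∀ s, c s ≠ s) {x : S → Bool} (hx : IsSel c x)
    (a : S) : IsSel c (updSel c x a) := by
  intro s
  have h1 := hc; have h2 := hc'; have h3 := hx s
  unfold updSel
  split_ifs <;> first | (simp; done) | grind

/-- Indicator weight of a selector. -/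
def ind (x : S → Bool) : S → ℚ := fun s => if x s = true then 1 else 0

lemma ind_bal {x : S → Bool} (hx : IsSel c x) (s : S) : ind x s + ind x (c s) = 1 := by
  unfold ind; rw [hx s]; cases x s <;> simp

lemma ev_ind (J : Finset ι) (X : ι → S → Bool) (t : ι → S) :
    ev J (fun j => ind (X j)) t = if ∀ j ∈ J, X j (t j) = true then 1 else 0 := by
  unfold ev ind
  rw [Finset.prod_ite_zero]
  simp

lemma sum_ind {J : Finset ι} {T : Finset (ι → S)} (hT : CodeOn c J T) {X : ι → S → Bool}
    (hX : ∀ j, IsSel c (X j)) :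
    ∑ t ∈ T, ev J (fun j => ind (X j)) t =
      if ∃ t ∈ T, ∀ j ∈ J, X j (t j) = true then 1 else 0 := by
  split_ifs with h
  · obtain ⟨t, ht, hj⟩ := h
    rw [Finset.sum_eq_single_of_mem t ht, ev_ind, if_pos hj]
    intro t₂ ht₂ hne
    rw [ev_ind, if_neg]
    intro h2
    obtain ⟨j, hjJ, e⟩ := hT t₂ ht₂ t ht hne
    have a1 := h2 j hjJ
    rw [e, hX j, hj j hjJ] at a1
    simp at a1
  · refine Finset.sum_eq_zero fun t ht => ?_
    rw [ev_ind, if_neg]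
    intro h2; exact h ⟨t, ht, h2⟩

lemma span_sel [Fintype S] (hc : ∀ s, c (c s) = s) (hc' : ∀ s, c s ≠ s) (φ : S → ℚ) (τ : ℚ)
    (h : ∀ s, φ s + φ (c s) = τ) :
    ∃ k : {x : S → Bool // IsSel c x} → ℚ, ∀ s, φ s = ∑ᶠ x, k x * ind x.1 s := by
  classical
  obtain ⟨x₀, hx₀⟩ := exists_sel hc hc'
  have hm : φ ∈ Submodule.span ℚ (Set.range fun x : {x : S → Bool // IsSel c x} => ind x.1) := by
    have hin : ∀ x, IsSel c x →
        ind x ∈ Submodule.span ℚ (Set.range fun x : {x : S → Bool // IsSel c x} => ind x.1) :=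
      fun x hx => Submodule.subset_span ⟨⟨x, hx⟩, rfl⟩
    have e : φ = τ • ind x₀ + ∑ r ∈ Finset.univ.filter (fun r => x₀ r = true),
        (φ r - τ) • (ind x₀ - ind (updSel c x₀ (c r))) := by
      funext s
      have hdiff : ∀ r ∈ Finset.univ.filter (fun r => x₀ r = true),
          ((φ r - τ) • (ind x₀ - ind (updSel c x₀ (c r)))) s =
          (if r = s then φ r - τ else 0) + (if r = c s then - (φ r - τ) else 0) := by
        intro r hr
        have hr := (Finset.mem_filter.1 hr).2
        have h1 := hc; have h2 := hc'; have h3 := hx₀ r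
        rw [hr] at h3
        simp only [Pi.smul_apply, Pi.sub_apply, smul_eq_mul, ind, updSel, hc]
        by_cases a : r = s
        · subst a
          simp [hr, (hc' r).symm]
        · by_cases b : r = c s
          · have b' : s = c r := by rw [b, hc]
            subst b'
            simp [h3, hc, (hc' r).symm]
          · have b' : s ≠ c r := fun e => b (by rw [e, hc])
            simp [a, b, b', Ne.symm a]
      simp only [Pi.add_apply, Finset.sum_apply, Pi.smul_apply, smul_eq_mul]
      simp only [Pi.smul_apply, smul_eq_mul] at hdiff
      rw [Finset.sum_congr rfl hdiff, Finset.sum_add_distrib, Finset.sum_ite_eq', Finset.sum_ite_eq']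
      have h3 := hx₀ s
      have h4 := h s
      cases hs : x₀ s
      · rw [hs] at h3
        simp [ind, hs, h3]; linarith
      · rw [hs] at h3
        simp [ind, hs, h3]
    rw [e]
    refine Submodule.add_mem _ (Submodule.smul_mem _ _ (hin _ hx₀)) (Submodule.sum_mem _ fun r _ =>
      Submodule.smul_mem _ _ (Submodule.sub_mem _ (hin _ hx₀) (hin _ (updSel_sel hc hc' hx₀ _))))
  obtain ⟨k, hk⟩ := (Submodule.mem_span_range_iff_exists_fun ℚ).1 hm
  refine ⟨k, fun s => ?_⟩
  rw [finsum_eq_sum_of_fintype, ← hk]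
  simp

end Aux

lemma eqE_of_equivalent {S : Type} [Fintype S] [DecidableEq S] {d : ℕ} {c : S → S}
    (hc : ∀ s, c (c s) = s) (hc' : ∀ s, c s ≠ s)
    {V W : Finset (Fin d → S)} (hV : IsCode c V) (hW : IsCode c W) (heq : Equivalent c V W) :
    EqE c Finset.univ V W := by
  classical
  have cd : ∀ T : Finset (Fin d → S), IsCode c T → CodeOn c Finset.univ T := by
    intro T hT t ht t₂ ht₂ hne
    obtain ⟨i, hi⟩ := hT t ht t₂ ht₂ hne
    exact ⟨i, Finset.mem_univ _, hi⟩
  obtain ⟨x₀, hx₀⟩ := exists_sel hc hc'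
  -- the canonical realization
  let f : ∀ _ : Fin d, S → Set {x : S → Bool // IsSel c x} := fun _ s => {x | x.1 s = true}
  have hf : IsRealization c (fun _ => {x : S → Bool // IsSel c x}) f := by
    intro i s
    refine ⟨⟨⟨updSel c x₀ s, updSel_sel hc hc' hx₀ s⟩, by simp [f, updSel]⟩, ?_, ?_⟩
    · intro e
      have : (⟨updSel c x₀ (c s), updSel_sel hc hc' hx₀ (c s)⟩ : {x : S → Bool // IsSel c x}) ∈
          f i s := by rw [e]; trivial
      simp [f, updSel, hc, (hc' s).symm] at this
    · ext x
      simp [f, x.2 s]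
  have hcov : ∀ A B : Finset (Fin d → S), Covered c A B → ∀ X : Fin d → {x : S → Bool // IsSel c x},
      (∃ t ∈ A, ∀ j ∈ Finset.univ, (X j).1 (t j) = true) →
      ∃ t ∈ B, ∀ j ∈ Finset.univ, (X j).1 (t j) = true := by
    rintro A B hAB X ⟨t, ht, h⟩
    have hx : X ∈ box f t := fun i => h i (Finset.mem_univ _)
    have := hAB t ht _ f hf hx
    simp only [Set.mem_iUnion] at this
    obtain ⟨b, hb, hxb⟩ := this
    exact ⟨b, hb, fun j _ => hxb j⟩
  have point : ∀ X : Fin d → {x : S → Bool // IsSel c x},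
      ∑ t ∈ V, ev Finset.univ (fun j => ind (X j).1) t =
      ∑ t ∈ W, ev Finset.univ (fun j => ind (X j).1) t := by
    intro X
    rw [sum_ind (cd V hV) (X := fun j => (X j).1) fun j => (X j).2,
      sum_ind (cd W hW) (X := fun j => (X j).1) fun j => (X j).2]
    have : (∃ t ∈ V, ∀ j ∈ Finset.univ, (X j).1 (t j) = true) ↔
        (∃ t ∈ W, ∀ j ∈ Finset.univ, (X j).1 (t j) = true) :=
      ⟨hcov V W heq.1 X, hcov W V heq.2 X⟩
    split_ifs with p q q <;> first | rfl | exact absurd (this.1 p) q | exact absurd (this.2 q) p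
  intro φ hφ
  have hk : ∀ j, ∃ k : {x : S → Bool // IsSel c x} → ℚ, ∀ s, φ j s = ∑ᶠ x, k x * ind x.1 s := by
    intro j
    obtain ⟨τ, hτ⟩ := hφ j (Finset.mem_univ _)
    exact span_sel hc hc' (φ j) τ hτ
  choose k hk using hk
  have hev : ∀ t : Fin d → S, ev Finset.univ φ t =
      ∑ X : Fin d → {x : S → Bool // IsSel c x},
        (∏ j, k j (X j)) * ev Finset.univ (fun j => ind (X j).1) t := by
    intro t
    unfold ev
    simp_rw [hk, finsum_eq_sum_of_fintype]
    rw [Finset.prod_univ_sum]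
    rw [Fintype.piFinset_univ]
    exact Finset.sum_congr rfl fun X _ => Finset.prod_mul_distrib
  simp_rw [hev]
  rw [Finset.sum_comm, Finset.sum_comm (s := W)]
  refine Finset.sum_congr rfl fun X _ => ?_
  rw [← Finset.mul_sum, ← Finset.mul_sum, point X]

/-- Setting of the theorem for one of the two codes. -/
lemma three_dirs {S : Type} [DecidableEq S] {c : S → S}
    (hc : ∀ s, c (c s) = s) (hc' : ∀ s, c s ≠ s)
    {V W : Finset (Fin 5 → S)} (hE : EqE c Finset.univ V W) (tf : TFOn c Finset.univ V)
    {v : Fin 5 → S} (hv : v ∈ V) (hvW : v ∉ W) (hnd : ∀ q ∈ W, ∀ i, q i ≠ c (v i)) :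
    3 ≤ (Finset.univ.filter (fun i => ∃ p ∈ V, p i = c (v i))).card := by
  let φ : Fin 5 → S → ℚ := fun j x => if x = v j then 1 else if x = c (v j) then -1 else 0
  have hs := hE φ (by
    intro j _
    refine ⟨0, fun s => ?_⟩
    have h1 := hc; have h2 := hc'
    simp only [φ]
    split_ifs <;> first | (norm_num; done) | grind)
  rw [Finset.sum_eq_zero (s := W)] at hs
  · have hneg : ∃ p ∈ V, ev Finset.univ φ p < 0 := by
      by_contra hcon
      push Not at hcon
      have h1 := Finset.single_le_sum (f := fun t => ev Finset.univ φ t) hcon hv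
      have h2 : ev Finset.univ φ v = 1 := Finset.prod_eq_one fun j _ => by simp [φ]
      linarith
    obtain ⟨p, hp, hneg⟩ := hneg
    have hpl : ∀ j, p j = v j ∨ p j = c (v j) := by
      intro j
      by_contra hcon
      have h0 : ev Finset.univ φ p = 0 := Finset.prod_eq_zero (Finset.mem_univ j) (by
        simp only [φ]; rw [if_neg (by tauto), if_neg (by tauto)])
      rw [h0] at hneg; exact lt_irrefl _ hneg
    set D := Finset.univ.filter (fun j => p j = c (v j)) with hD
    have hev : ev Finset.univ φ p = (-1) ^ D.card := by
      unfold ev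
      rw [← Finset.prod_const, hD, Finset.prod_filter]
      refine Finset.prod_congr rfl fun j _ => ?_
      simp only [φ]
      rcases hpl j with e | e
      · simp [e, (hc' (v j)).symm]
      · simp [e, hc' (v j)]
    have hodd : Odd D.card := by
      by_contra hev'
      rw [Nat.not_odd_iff_even] at hev'
      rw [hev, hev'.neg_one_pow] at hneg
      linarith
    have hD1 : D.card ≠ 1 := by
      intro h1
      obtain ⟨i, hi⟩ := Finset.card_eq_one.1 h1
      have hiD : i ∈ D := by rw [hi]; simp
      refine tf p hp v hv i (Finset.mem_univ _) (Finset.mem_filter.1 hiD).2 fun k _ hki => ?_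
      refine (hpl k).resolve_right fun e => hki ?_
      have : k ∈ D := Finset.mem_filter.2 ⟨Finset.mem_univ _, e⟩
      rw [hi] at this; simpa using this
    have hle : D.card ≤ (Finset.univ.filter (fun i => ∃ p ∈ V, p i = c (v i))).card :=
      Finset.card_le_card fun j hj =>
        Finset.mem_filter.2 ⟨Finset.mem_univ _, p, hp, (Finset.mem_filter.1 hj).2⟩
    obtain ⟨m, hm⟩ := hodd
    omega
  · intro q hq
    have : ∃ j, q j ≠ v j := by
      by_contra hcon
      push Not at hcon
      exact hvW (by rwa [← funext hcon])
    obtain ⟨j, hj⟩ := this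
    exact Finset.prod_eq_zero (Finset.mem_univ j) (by
      simp only [φ]; rw [if_neg hj, if_neg (hnd q hq j)])

lemma half_bound {S : Type} [Fintype S] [DecidableEq S] {c : S → S}
    (hc : ∀ s, c (c s) = s) (hc' : ∀ s, c s ≠ s)
    {V W : Finset (Fin 5 → S)} (hV : IsCode c V) (hW : IsCode c W) (hdisj : Disjoint V W)
    (hE : EqE c Finset.univ V W) (tf : TFOn c Finset.univ V)
    {v : Fin 5 → S} (hnd : ∀ q ∈ W, ∀ i, q i ≠ c (v i))
    {i : Fin 5} {p : Fin 5 → S} (hp : p ∈ V) (hpi : p i = c (v i)) :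
    8 ≤ (V.filter (fun t => t i = v i)).card := by
  set a := v i with ha
  set J : Finset (Fin 5) := Finset.univ.erase i with hJ
  have mJ : ∀ j, j ∈ J ↔ j ≠ i := by simp [hJ]
  set Va := V.filter (fun t => t i = a) with hVa
  set Va' := V.filter (fun t => t i = c a) with hVa'
  set Wa := W.filter (fun t => t i = a) with hWa
  have hWe : W.filter (fun t => t i = c a) = ∅ :=
    Finset.filter_eq_empty_iff.2 fun q hq => hnd q hq i
  have hdv : ∀ φ : Fin 5 → S → ℚ, (∀ j ∈ J, ∃ τ, ∀ s, φ j s + φ j (c s) = τ) →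
      ∑ t ∈ Va, ev J φ t = ∑ t ∈ Va', ev J φ t + ∑ t ∈ Wa, ev J φ t := by
    intro φ hφ
    have := hE.deriv hc hc' (Finset.mem_univ i) a φ hφ
    rw [hWe, Finset.sum_empty] at this
    linarith
  have sub : ∀ T : Finset (Fin 5 → S), IsCode c T → ∀ r : S, ∀ x ∈ T.filter (fun t => t i = r),
      ∀ y ∈ T.filter (fun t => t i = r), x ≠ y → ∃ j ∈ J, x j = c (y j) := by
    intro T hT r x hx y hy hxy
    obtain ⟨hxC, hxi⟩ := Finset.mem_filter.1 hx
    obtain ⟨hyC, hyi⟩ := Finset.mem_filter.1 hy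
    obtain ⟨j, e⟩ := hT x hxC y hyC hxy
    refine ⟨j, (mJ j).2 ?_, e⟩
    rintro rfl; rw [hxi, hyi] at e; exact hc' _ e.symm
  have cross : ∀ x ∈ Va', ∀ y ∈ Wa, ∃ j ∈ J, x j = c (y j) := by
    intro x hx y hy
    by_contra hcon
    push Not at hcon
    obtain ⟨x₀, hx₀⟩ := exists_sel hc hc'
    let X : Fin 5 → S → Bool := fun j => updSel c (updSel c x₀ (y j)) (x j)
    have hX : ∀ j, IsSel c (X j) := fun j =>
      updSel_sel hc hc' (updSel_sel hc hc' hx₀ _) _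
    have e := hdv (fun j => ind (X j)) fun j _ => ⟨1, ind_bal (hX j)⟩
    rw [sum_ind (sub V hV a) hX, sum_ind (sub V hV (c a)) hX, sum_ind (sub W hW a) hX] at e
    rw [if_pos (⟨x, hx, fun j _ => by simp [X, updSel]⟩ :
        ∃ t ∈ Va', ∀ j ∈ J, X j (t j) = true),
      if_pos (⟨y, hy, fun j hj => ?_⟩ : ∃ t ∈ Wa, ∀ j ∈ J, X j (t j) = true)] at e
    · split_ifs at e <;> norm_num at e
    · have h1 := hcon j hj
      have h2 : y j ≠ c (x j) := fun e => h1 (by rw [e, hc])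
      simp [X, updSel, h2]
  have hdU : Disjoint Va' Wa := by
    rw [Finset.disjoint_left]
    intro x hx hx'
    exact (Finset.disjoint_left.1 hdisj) (Finset.mem_filter.1 hx).1 (Finset.mem_filter.1 hx').1
  refine eight_le hc hc' (J := J) (T := Va) (U := Va' ∪ Wa) ?_ ?_ ?_ ?_ ?_ ?_ ?_
  · simp [hJ]
  · intro φ hφ
    rw [hdv φ hφ, Finset.sum_union hdU]
  · exact sub V hV a
  · intro x hx y hy hxy
    rcases Finset.mem_union.1 hx with hx | hx <;> rcases Finset.mem_union.1 hy with hy | hy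
    · exact sub V hV (c a) x hx y hy hxy
    · exact cross x hx y hy
    · obtain ⟨j, hj, e⟩ := cross y hy x hx
      exact ⟨j, hj, by rw [e, hc]⟩
    · exact sub W hW a x hx y hy hxy
  · intro x hx y hy j hj e hk
    obtain ⟨hxC, hxi⟩ := Finset.mem_filter.1 hx
    obtain ⟨hyC, hyi⟩ := Finset.mem_filter.1 hy
    refine tf x hxC y hyC j (Finset.mem_univ _) e fun k _ hkj => ?_
    by_cases hki : k = i
    · rw [hki, hxi, hyi]
    · exact hk k ((mJ k).2 hki) hkj
  · intro x hx y hy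
    by_contra hcon
    push Not at hcon
    obtain ⟨hxC, hxi⟩ := Finset.mem_filter.1 hx
    rcases Finset.mem_union.1 hy with hy | hy
    · obtain ⟨hyC, hyi⟩ := Finset.mem_filter.1 hy
      exact tf x hxC y hyC i (Finset.mem_univ _) (by rw [hxi, hyi, hc]) fun k _ hki =>
        hcon k ((mJ k).2 hki)
    · obtain ⟨hyC, hyi⟩ := Finset.mem_filter.1 hy
      have : x = y := by
        funext k
        by_cases hki : k = i
        · rw [hki, hxi, hyi]
        · exact hcon k ((mJ k).2 hki)
      subst this
      exact (Finset.disjoint_left.1 hdisj) hxC hyC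
  · exact ⟨p, Finset.mem_union_left _ (Finset.mem_filter.2 ⟨hp, hpi⟩)⟩

/-- Counting form of the derivative identity. -/
lemma card_deriv {S : Type} [DecidableEq S] {c : S → S}
    (hc : ∀ s, c (c s) = s) (hc' : ∀ s, c s ≠ s)
    {V W : Finset (Fin 5 → S)} (hE : EqE c Finset.univ V W) (i : Fin 5) (s : S) :
    (V.filter (fun t => t i = s)).card + (W.filter (fun t => t i = c s)).card =
    (W.filter (fun t => t i = s)).card + (V.filter (fun t => t i = c s)).card := by
  have h := hE.deriv hc hc' (Finset.mem_univ i) s (fun _ _ => 1) fun _ _ => ⟨1 + 1, fun _ => rfl⟩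
  simp only [ev, Finset.prod_const_one, Finset.sum_const, nsmul_eq_mul, mul_one] at h
  have : ((V.filter (fun t => t i = s)).card : ℚ) + (W.filter (fun t => t i = c s)).card =
    (W.filter (fun t => t i = s)).card + (V.filter (fun t => t i = c s)).card := by linarith
  exact_mod_cast this

lemma card_three {S : Type} [DecidableEq S] (V : Finset (Fin 5 → S)) (i : Fin 5) (x y z : S)
    (hxy : x ≠ y) (hxz : x ≠ z) (hyz : y ≠ z) :
    (V.filter (fun t => t i = x)).card + (V.filter (fun t => t i = y)).card +
      (V.filter (fun t => t i = z)).card ≤ V.card := by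
  rw [← Finset.card_union_of_disjoint, ← Finset.card_union_of_disjoint]
  · exact Finset.card_le_card (by intro t; simp; tauto)
  · rw [Finset.disjoint_left]; intro t; simp; grind
  · rw [Finset.disjoint_left]; intro t; simp; grind

/-- Lemma "noN" of the paper. -/
theorem twin_pair_free_min_covers_not_both_full
    {S : Type} [Fintype S] [DecidableEq S] (c : S → S)
    (hc : ∀ s, c (c s) = s) (hc' : ∀ s, c s ≠ s)
    (V W : Finset (Fin 5 → S)) (hV : IsCode c V) (hW : IsCode c W)
    (hdisj : Disjoint V W) (heq : Equivalent c V W) (hcard : V.card ≤ 15) :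
    ∀ v ∈ V, ∀ w ∈ W, ∀ Cv Cw : Finset (Fin 5 → S),
      Cv ⊆ W → Cw ⊆ V → TwinPairFree c Cv → TwinPairFree c Cw →
      MinCoverWord c Cv v → MinCoverWord c Cw w →
      Cv.card < V.card ∨ Cw.card < V.card := by
  intro v hv w hw Cv Cw hCv hCw tfv tfw hmv hmw
  by_contra hcon
  push Not at hcon
  obtain ⟨h1, h2⟩ := hcon
  have hE := eqE_of_equivalent hc hc' hV hW heq
  have hE' : EqE c Finset.univ W V := fun φ hφ => (hE φ hφ).symm
  have hcardE : V.card = W.card := by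
    have h := hE (fun _ _ => 1) fun _ _ => ⟨1 + 1, fun _ => rfl⟩
    simp only [ev, Finset.prod_const_one, Finset.sum_const, nsmul_eq_mul, mul_one] at h
    exact_mod_cast h
  have e1 : Cv = W := Finset.eq_of_subset_of_card_le hCv (by omega)
  have e2 : Cw = V := Finset.eq_of_subset_of_card_le hCw (by omega)
  subst e1 e2
  have tfV : TFOn c Finset.univ Cw := fun x hx y hy j _ e hk =>
    tfw x hx y hy j ⟨e, fun k hkj => hk k (Finset.mem_univ _) hkj⟩
  have tfW : TFOn c Finset.univ Cv := fun x hx y hy j _ e hk =>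
    tfv x hx y hy j ⟨e, fun k hkj => hk k (Finset.mem_univ _) hkj⟩
  have ndv : ∀ q ∈ Cv, ∀ i, q i ≠ c (v i) := fun q hq i e => hmv.2.2 q hq ⟨i, e⟩
  have ndw : ∀ q ∈ Cw, ∀ i, q i ≠ c (w i) := fun q hq i e => hmw.2.2 q hq ⟨i, e⟩
  have t1 := three_dirs hc hc' hE tfV hv (Finset.disjoint_left.1 hdisj hv) ndv
  have t2 := three_dirs hc hc' hE' tfW hw (Finset.disjoint_right.1 hdisj hw) ndw
  have hex : ∃ i, (∃ p ∈ Cw, p i = c (v i)) ∧ (∃ q ∈ Cv, q i = c (w i)) := by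
    by_contra hno
    have hdis : Disjoint (Finset.univ.filter (fun i => ∃ p ∈ Cw, p i = c (v i)))
        (Finset.univ.filter (fun i => ∃ q ∈ Cv, q i = c (w i))) := by
      rw [Finset.disjoint_left]
      intro i hi hi'
      exact hno ⟨i, (Finset.mem_filter.1 hi).2, (Finset.mem_filter.1 hi').2⟩
    have h3 := Finset.card_union_of_disjoint hdis
    have h4 := Finset.card_le_univ (Finset.univ.filter (fun i => ∃ p ∈ Cw, p i = c (v i)) ∪
      Finset.univ.filter (fun i => ∃ q ∈ Cv, q i = c (w i)))
    rw [Fintype.card_fin] at h4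
    omega
  obtain ⟨i, ⟨p, hp, hpi⟩, ⟨q, hq, hqi⟩⟩ := hex
  have b1 := half_bound hc hc' hV hW hdisj hE tfV ndv hp hpi
  have b2 := half_bound hc hc' hW hV hdisj.symm hE' tfW ndw hq hqi
  have d1 := card_deriv hc hc' hE i (v i)
  have d2 := card_deriv hc hc' hE i (w i)
  have z1 : Cv.filter (fun t => t i = c (v i)) = ∅ :=
    Finset.filter_eq_empty_iff.2 fun x hx => ndv x hx i
  have z2 : Cw.filter (fun t => t i = c (w i)) = ∅ :=
    Finset.filter_eq_empty_iff.2 fun x hx => ndw x hx i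
  rw [z1, Finset.card_empty] at d1
  rw [z2, Finset.card_empty] at d2
  have n1 : v i ≠ c (w i) := ndw v hv i
  have n2 : w i ≠ c (v i) := ndv w hw i
  have n3 : v i ≠ w i := fun e => ndw p hp i (by rw [hpi, e])
  have s1 := card_three Cw i (v i) (c (v i)) (w i) (hc' _).symm n3 (Ne.symm n2)
  have s2 := card_three Cv i (v i) (w i) (c (w i)) n3 n1 (hc' _).symm
  omega

end PolyboxPaper
end

section
/- Let S = {a,a',b,b'} be a four-letter alphabet with complementation. Any two equivalent polybox codes V, W ⊆ S^4 with |V| = 15 are strongly equivalent. -/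
/- Common framework: polybox codes over a finite alphabet `S` with a
complementation `c : S → S` (an involution without fixed points). -/

namespace PolyboxPaper

variable {S : Type} [Fintype S] [DecidableEq S] {d : ℕ}

abbrev L := Bool × Bool

/-- complementation on the concrete alphabet -/
def flp (s : L) : L := (s.1, !s.2)

/-- the letter `s` contains the point `x` -/
def lmem (s x : L) : Bool := (if s.1 then x.2 else x.1) == s.2

abbrev W3 := L × L × L

def get3 (u : W3) (i : Fin 3) : L := match i with
  | 0 => u.1
  | 1 => u.2.1
  | 2 => u.2.2

def set3 (u : W3) (i : Fin 3) (l : L) : W3 := match i with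
  | 0 => (l, u.2.1, u.2.2)
  | 1 => (u.1, l, u.2.2)
  | 2 => (u.1, u.2.1, l)

def leq (s t : L) : Bool := s.1 == t.1 && s.2 == t.2
def ldich (s t : L) : Bool := s.1 == t.1 && s.2 != t.2

def eq3 (u v : W3) : Bool := leq u.1 v.1 && leq u.2.1 v.2.1 && leq u.2.2 v.2.2
def dich3 (u v : W3) : Bool := ldich u.1 v.1 || ldich u.2.1 v.2.1 || ldich u.2.2 v.2.2
def mem3 (u x : W3) : Bool := lmem u.1 x.1 && lmem u.2.1 x.2.1 && lmem u.2.2 x.2.2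

def cand1 (x : L) : List L := [(false, x.1), (true, x.2)]
def cands (x : W3) : List W3 :=
  (cand1 x.1).flatMap fun p => (cand1 x.2.1).flatMap fun q => (cand1 x.2.2).map fun r => (p, q, r)

def has (ch : List W3) (u : W3) : Bool := ch.any fun v => eq3 v u
def conflict (ch : List W3) (u : W3) : Bool := ch.any fun v => !eq3 v u && !dich3 v u

/-- twins in direction `i` -/
def twin3 (i : Fin 3) (u v : W3) : Bool :=
  eq3 v (set3 u i (flp (get3 u i)))

def aaa : W3 := ((false, false), (false, false), (false, false))

def pts : List W3 :=
  [false, true].flatMap fun p => [false, true].flatMap fun q => [false, true].map fun r =>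
    ((false, p), (false, q), (false, r))

def glue (ch : List W3) (u : W3) (i : Fin 3) (k : Bool) : List W3 :=
  set3 u i (k, false) :: set3 u i (k, true) ::
    ch.filter fun v => !eq3 v u && !eq3 v (set3 u i (flp (get3 u i)))

def dirs : List (Fin 3) := [0, 1, 2]

def findMerge (fb : Option (Fin 3)) (ch : List W3) (k : Bool) : Option (W3 × Fin 3) :=
  ch.findSome? fun u => dirs.findSome? fun i =>
    if (get3 u i).1 == k && (fb != some i) && has ch (set3 u i (flp (get3 u i)))
    then some (u, i) else none

def srch : Nat → Option (Fin 3) → List W3 → List W3 → Bool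
  | 0, _, _, _ => false
  | n+1, fb, ch, ca =>
    has ch aaa ||
    match findMerge fb ch true with
    | some (u, i) =>
      has ch u && has ch (set3 u i (flp (get3 u i))) && srch n none (glue ch u i false) ca
    | none =>
    match pts.find? (fun x => !ch.any (fun u => mem3 u x)) with
    | some x => (ca.any fun u => mem3 u x) &&
        (cands x).all fun u => conflict ch u || srch n none (u :: ch) ca
    | none =>
    -- five word configuration
    match findMerge none (ch) false with
    | some (u, i) =>
      has ch u && has ch (set3 u i (flp (get3 u i))) && srch n (some i) (glue ch u i true) ca
    | none =>
    match ca with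
    | [_] =>
      match ch.find? (fun u => u.1.1 && u.2.1.1 && u.2.2.1) with
      | none => false
      | some s =>
        let y : W3 := ((true, s.1.2), (true, s.2.1.2), (true, s.2.2.2))
        (ch.any fun u => mem3 u y) &&
          (cands y).all fun u => conflict ca u || srch n none ch (u :: ca)
    | [] => false
    | u :: _ =>
      match ch.find? (fun u => u.1.1 && u.2.1.1 && u.2.2.1), dirs.find? (fun i => eq3 (set3 u i (false, true)) u) with
      | some s, some i =>
        let y : W3 := ((true, s.1.2), (true, s.2.1.2), (true, s.2.2.2))
        let z := set3 y i (true, !(get3 y i).2)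
        (ca.any fun u => mem3 u z) &&
          (cands z).all fun u => conflict ch u || srch n none (u :: ch) ca
      | _, _ => false

set_option maxRecDepth 100000 in
theorem srch_true : srch 40 none [] [aaa] = true := by decide +kernel

theorem flp_flp (s : L) : flp (flp s) = s := by revert s; decide
theorem flp_ne (s : L) : flp s ≠ s := by revert s; decide
theorem lmem_flp (s x : L) : lmem (flp s) x = !lmem s x := by revert s x; decide
theorem lmem_common (s t : L) : s ≠ flp t → ∃ x, lmem s x = true ∧ lmem t x = true := by
  revert s t; decide

/-- the point `x` is in the box of `v` -/
def Inb {d : ℕ} (v x : Fin d → L) : Prop := ∀ i, lmem (v i) (x i) = true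

instance {d : ℕ} (v x : Fin d → L) : Decidable (Inb v x) :=
  decidable_of_iff (∀ i, lmem (v i) (x i) = true) Iff.rfl

/-- the point `x` is covered by the code `V` -/
def Cov {d : ℕ} (V : Finset (Fin d → L)) (x : Fin d → L) : Prop := ∃ v ∈ V, Inb v x

/-- equal unions -/
def EqU {d : ℕ} (V W : Finset (Fin d → L)) : Prop := ∀ x, Cov V x ↔ Cov W x

theorem EqU.symm {d : ℕ} {V W : Finset (Fin d → L)} (h : EqU V W) : EqU W V := fun x => (h x).symm
theorem EqU.trans {d : ℕ} {V W U : Finset (Fin d → L)} (h : EqU V W) (h2 : EqU W U) : EqU V U :=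
  fun x => (h x).trans (h2 x)

theorem dich_symm {d : ℕ} {v w : Fin d → L} (h : Dich flp v w) : Dich flp w v := by
  obtain ⟨i, hi⟩ := h
  exact ⟨i, by rw [hi, flp_flp]⟩

theorem not_dich_self {d : ℕ} (v : Fin d → L) : ¬ Dich flp v v := by
  rintro ⟨i, hi⟩
  exact flp_ne _ hi.symm

theorem not_dich_of_inb {d : ℕ} {v w x : Fin d → L} (hv : Inb v x) (hw : Inb w x) :
    ¬ Dich flp v w := by
  rintro ⟨i, hi⟩
  have h1 := hv i
  rw [hi, lmem_flp, hw i] at h1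
  simp at h1

theorem exists_inb {d : ℕ} {v w : Fin d → L} (h : ¬ Dich flp v w) : ∃ x, Inb v x ∧ Inb w x := by
  have : ∀ i, ∃ x, lmem (v i) x = true ∧ lmem (w i) x = true := fun i =>
    lmem_common _ _ fun hi => h ⟨i, hi⟩
  choose x hx using this
  exact ⟨x, fun i => (hx i).1, fun i => (hx i).2⟩

theorem IsCode.eq_of_inb {d : ℕ} {V : Finset (Fin d → L)} (hV : IsCode flp V) {v w x : Fin d → L}
    (hv : v ∈ V) (hw : w ∈ V) (hvx : Inb v x) (hwx : Inb w x) : v = w := by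
  by_contra h
  exact not_dich_of_inb hvx hwx (hV v hv w hw h)

theorem twin_dich {d : ℕ} {v w q u : Fin d → L} {i : Fin d} (h : TwinPair flp v w i)
    (hq : ∀ j, j ≠ i → q j = v j) (h1 : Dich flp u v) (h2 : Dich flp u w) : Dich flp u q := by
  obtain ⟨j, hj⟩ := h1
  obtain ⟨k, hk⟩ := h2
  by_cases hji : j = i
  · by_cases hki : k = i
    · subst hji
      subst hki
      rw [← h.1] at hk
      rw [hk] at hj
      exact absurd hj.symm (flp_ne _)
    · exact ⟨k, by rw [hq k hki, h.2 k hki, hk]⟩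
  · exact ⟨j, by rw [hq j hji, hj]⟩

theorem twin_inb {d : ℕ} {v w x : Fin d → L} {i : Fin d} (h : TwinPair flp v w i) :
    (Inb v x ∨ Inb w x) ↔ ∀ j, j ≠ i → lmem (v j) (x j) = true := by
  constructor
  · rintro (h1 | h1) j hj
    · exact h1 j
    · rw [h.2 j hj]; exact h1 j
  · intro h1
    cases h2 : lmem (v i) (x i) with
    | true =>
      left
      intro j
      by_cases hj : j = i
      · rw [hj, h2]
      · exact h1 j hj
    | false =>
      right
      intro j
      by_cases hj : j = i
      · rw [h.1, lmem_flp] at h2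
        rw [hj]; simpa using h2
      · rw [← h.2 j hj]; exact h1 j hj

theorem step_dich {d : ℕ} {V W : Finset (Fin d → L)} (h : GCStep flp V W) {u : Fin d → L}
    (hu : ∀ v ∈ V, Dich flp u v) : ∀ v ∈ W, Dich flp u v := by
  obtain ⟨v, w, q, t, i, hv, hw, h1, h2, h3, rfl⟩ := h
  intro z hz
  simp only [Finset.mem_union, Finset.mem_sdiff, Finset.mem_insert, Finset.mem_singleton] at hz
  rcases hz with hz | rfl | rfl
  · exact hu _ hz.1
  · exact twin_dich h1 h3 (hu _ hv) (hu _ hw)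
  · exact twin_dich h1 (fun j hj => by rw [← h2.2 j hj, h3 j hj]) (hu _ hv) (hu _ hw)

theorem step_code {d : ℕ} {V W : Finset (Fin d → L)} (h : GCStep flp V W)
    (hV : IsCode flp V) : IsCode flp W := by
  obtain ⟨v, w, q, t, i, hv, hw, h1, h2, h3, rfl⟩ := h
  have h4 : ∀ j, j ≠ i → t j = v j := fun j hj => by rw [← h2.2 j hj, h3 j hj]
  have key : ∀ z ∈ V \ {v, w}, Dich flp z q ∧ Dich flp z t := by
    intro z hz
    simp only [Finset.mem_sdiff, Finset.mem_insert, Finset.mem_singleton, not_or] at hz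
    have a1 := hV z hz.1 v hv hz.2.1
    have a2 := hV z hz.1 w hw hz.2.2
    exact ⟨twin_dich h1 h3 a1 a2, twin_dich h1 h4 a1 a2⟩
  have hqt : Dich flp q t := ⟨i, h2.1⟩
  intro z hz y hy hzy
  rw [Finset.mem_union] at hz hy
  have e : ∀ z : Fin d → L, z ∈ ({q, t} : Finset (Fin d → L)) ↔ z = q ∨ z = t := by simp
  rw [e] at hz hy
  rcases hz with hz | rfl | rfl <;> rcases hy with hy | rfl | rfl
  · simp only [Finset.mem_sdiff] at hz hy
    exact hV _ hz.1 _ hy.1 hzy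
  · exact (key _ hz).1
  · exact (key _ hz).2
  · exact dich_symm (key _ hy).1
  · exact absurd rfl hzy
  · exact hqt
  · exact dich_symm (key _ hy).2
  · exact dich_symm hqt
  · exact absurd rfl hzy

theorem step_cov {d : ℕ} {V W : Finset (Fin d → L)} (h : GCStep flp V W) : EqU V W := by
  obtain ⟨v, w, q, t, i, hv, hw, h1, h2, h3, rfl⟩ := h
  intro x
  have e : (Inb v x ∨ Inb w x) ↔ (Inb q x ∨ Inb t x) := by
    rw [twin_inb h1, twin_inb h2]
    constructor
    · intro h j hj; rw [h3 j hj]; exact h j hj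
    · intro h j hj; rw [← h3 j hj]; exact h j hj
  constructor
  · rintro ⟨z, hz, hzx⟩
    by_cases hzz : z = v ∨ z = w
    · have : Inb v x ∨ Inb w x := by
        rcases hzz with rfl | rfl
        · exact Or.inl hzx
        · exact Or.inr hzx
      rcases e.1 this with h | h
      · exact ⟨q, by simp, h⟩
      · exact ⟨t, by simp, h⟩
    · exact ⟨z, by simp [hz, hzz], hzx⟩
  · rintro ⟨z, hz, hzx⟩
    simp only [Finset.mem_union, Finset.mem_sdiff, Finset.mem_insert, Finset.mem_singleton] at hz
    have : (Inb q x ∨ Inb t x) → Cov V x := by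
      intro h
      rcases e.2 h with h | h
      · exact ⟨v, hv, h⟩
      · exact ⟨w, hw, h⟩
    rcases hz with hz | rfl | rfl
    · exact ⟨z, hz.1, hzx⟩
    · exact this (Or.inl hzx)
    · exact this (Or.inr hzx)

theorem twin_eq {d : ℕ} {v w q : Fin d → L} {i : Fin d} (h : TwinPair flp v w i)
    (hq : ∀ j, j ≠ i → q j = v j) (hd : Dich flp q v) : q = w := by
  obtain ⟨j, hj⟩ := hd
  by_cases hji : j = i
  · funext k
    by_cases hk : k = i
    · rw [hk, ← hji, hj, hji, h.1, flp_flp]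
    · rw [hq k hk, h.2 k hk]
  · rw [hq j hji] at hj
    exact absurd hj.symm (flp_ne _)

theorem step_symm {d : ℕ} {V W : Finset (Fin d → L)} (h : GCStep flp V W)
    (hV : IsCode flp V) : GCStep flp W V := by
  obtain ⟨v, w, q, t, i, hv, hw, h1, h2, h3, rfl⟩ := h
  have h4 : ∀ j, j ≠ i → t j = v j := fun j hj => by rw [← h2.2 j hj, h3 j hj]
  have key : ∀ z, (∀ j, j ≠ i → z j = v j) → z ∈ V → z = v ∨ z = w := by
    intro z hz hzV
    by_cases hzv : z = v
    · exact Or.inl hzv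
    · exact Or.inr (twin_eq h1 hz (hV z hzV v hv hzv))
  refine ⟨q, t, v, w, i, by simp, by simp, h2, h1, fun j hj => (h3 j hj).symm, ?_⟩
  ext z
  simp only [Finset.mem_union, Finset.mem_sdiff, Finset.mem_insert, Finset.mem_singleton]
  have k1 := key q h3
  have k2 := key t h4
  constructor
  · intro hz
    by_cases hzz : z = v ∨ z = w
    · exact Or.inr hzz
    · refine Or.inl ⟨Or.inl ⟨hz, hzz⟩, ?_⟩
      rintro (rfl | rfl)
      · exact hzz (k1 hz)
      · exact hzz (k2 hz)
  · rintro (⟨hz | hz, hz'⟩ | rfl | rfl)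
    · exact hz.1
    · exact absurd hz hz'
    · exact hv
    · exact hw

theorem gc_inv {d : ℕ} {V W : Finset (Fin d → L)} (h : GC flp V W) (hV : IsCode flp V) :
    IsCode flp W ∧ EqU V W ∧ GC flp W V := by
  induction h with
  | refl => exact ⟨hV, fun _ => Iff.rfl, Relation.ReflTransGen.refl⟩
  | tail _ hs ih =>
    obtain ⟨h1, h2, h3⟩ := ih
    exact ⟨step_code hs h1, h2.trans (step_cov hs), Relation.ReflTransGen.head (step_symm hs h1) h3⟩

theorem gc_insert {d : ℕ} {V W : Finset (Fin d → L)} (h : GC flp V W) {u : Fin d → L}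
    (hu : ∀ v ∈ V, Dich flp u v) : GC flp (insert u V) (insert u W) := by
  have : (∀ v ∈ W, Dich flp u v) ∧ GC flp (insert u V) (insert u W) := by
    induction h with
    | refl => exact ⟨hu, Relation.ReflTransGen.refl⟩
    | @tail A B _ hs ih =>
      refine ⟨step_dich hs ih.1, ih.2.tail ?_⟩
      have hA := ih.1
      obtain ⟨v, w, q, t, i, hv, hw, h1, h2, h3, rfl⟩ := hs
      refine ⟨v, w, q, t, i, by simp [hv], by simp [hw], h1, h2, h3, ?_⟩
      have e1 : u ≠ v := fun h => not_dich_self v (h ▸ hA v hv)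
      have e2 : u ≠ w := fun h => not_dich_self w (h ▸ hA w hw)
      ext z
      simp only [Finset.mem_union, Finset.mem_sdiff, Finset.mem_insert, Finset.mem_singleton]
      constructor
      · rintro (rfl | h | h)
        · exact Or.inl ⟨Or.inl rfl, by simp [e1, e2]⟩
        · exact Or.inl ⟨Or.inr h.1, h.2⟩
        · exact Or.inr h
      · rintro (⟨rfl | h, h'⟩ | h)
        · exact Or.inl rfl
        · exact Or.inr (Or.inl ⟨h, h'⟩)
        · exact Or.inr (Or.inr h)
  exact this.2

def lxor (s t : L) : L := (xor s.1 t.1, xor s.2 t.2)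
def pxor (w x : L) : L :=
  if w.1 then (xor x.2 w.2, xor x.1 w.2) else (xor x.1 w.2, xor x.2 w.2)

theorem lmem_lxor (w s x : L) : lmem (lxor w s) (pxor w x) = lmem s x := by
  revert w s x; decide
theorem lxor_flp (w s : L) : lxor w (flp s) = flp (lxor w s) := by revert w s; decide
theorem lxor_lxor (w s : L) : lxor w (lxor w s) = s := by revert w s; decide
theorem lxor_zero (w : L) : lxor w (false, false) = w := by revert w; decide
theorem leq_iff (s t : L) : leq s t = true ↔ s = t := by revert s t; decide
theorem ldich_iff (s t : L) : ldich s t = true ↔ s = flp t := by revert s t; decide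
theorem ldich_lxor (w s t : L) : lxor w s = flp (lxor w t) ↔ ldich s t = true := by
  revert w s t; decide
theorem mem_cand1 (s x : L) : lmem s x = true → s ∈ cand1 x := by revert s x; decide

theorem eq3_iff (u v : W3) : eq3 u v = true ↔ u = v := by
  obtain ⟨a, b, c⟩ := u
  obtain ⟨a', b', c'⟩ := v
  simp only [eq3, Bool.and_eq_true, leq_iff, Prod.mk.injEq]
  tauto

/-- decoding a triple relative to the word `w` -/
def dec (w : Fin 3 → L) (u : W3) : Fin 3 → L := fun i => lxor (w i) (get3 u i)
def pdec (w : Fin 3 → L) (x : W3) : Fin 3 → L := fun i => pxor (w i) (get3 x i)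

theorem dec_inb (w : Fin 3 → L) (u x : W3) : Inb (dec w u) (pdec w x) ↔ mem3 u x = true := by
  simp only [Inb, dec, pdec, lmem_lxor, Fin.forall_fin_succ, mem3, Bool.and_eq_true]
  simp [get3, and_assoc]

theorem dec_dich (w : Fin 3 → L) (u v : W3) :
    Dich flp (dec w u) (dec w v) ↔ dich3 u v = true := by
  simp only [Dich, dec, ldich_lxor, Fin.exists_fin_succ, dich3, Bool.or_eq_true]
  simp [get3, or_assoc]

theorem get3_set3 (u : W3) (i : Fin 3) (l : L) : get3 (set3 u i l) i = l := by
  fin_cases i <;> rfl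
theorem get3_set3_ne (u : W3) (i j : Fin 3) (l : L) (h : j ≠ i) :
    get3 (set3 u i l) j = get3 u j := by
  fin_cases i <;> fin_cases j <;> first | rfl | exact absurd rfl h

theorem dec_aaa (w : Fin 3 → L) : dec w aaa = w := by
  funext i
  fin_cases i <;> exact lxor_zero _

theorem dec_inj (w : Fin 3 → L) {u v : W3} (h : dec w u = dec w v) : u = v := by
  have : ∀ i, get3 u i = get3 v i := fun i => by
    have := congrFun h i
    simp only [dec] at this
    rw [← lxor_lxor (w i) (get3 u i), this, lxor_lxor]
  exact Prod.ext (this 0) (Prod.ext (this 1) (this 2))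

theorem exists_cand (w : Fin 3 → L) (x : W3) (z : Fin 3 → L) (h : Inb z (pdec w x)) :
    ∃ u ∈ cands x, dec w u = z := by
  let u : W3 := (lxor (w 0) (z 0), lxor (w 1) (z 1), lxor (w 2) (z 2))
  have hu : dec w u = z := by
    funext i
    fin_cases i <;> exact lxor_lxor _ _
  refine ⟨u, ?_, hu⟩
  rw [← hu, dec_inb] at h
  simp only [mem3, Bool.and_eq_true] at h
  simp only [cands, List.mem_flatMap, List.mem_map]
  exact ⟨_, mem_cand1 _ _ h.1.1, _, mem_cand1 _ _ h.1.2, _, mem_cand1 _ _ h.2, rfl⟩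

def Win (w : Fin 3 → L) (Q : Finset (Fin 3 → L)) (ch ca : List W3) : Prop :=
  ∀ P, IsCode flp P → EqU P Q → (∀ u ∈ ch, dec w u ∈ P) → (∀ u ∈ ca, dec w u ∈ Q) →
    ∃ P2, GC flp P P2 ∧ w ∈ P2

theorem has_mem {ch : List W3} {u : W3} (h : has ch u = true) : u ∈ ch := by
  simp only [has, List.any_eq_true, eq3_iff] at h
  obtain ⟨x, hx, rfl⟩ := h
  exact hx

theorem win_has {w Q ch ca} (h : has ch aaa = true) : Win w Q ch ca := by
  intro P _ _ h1 _
  have := h1 _ (has_mem h)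
  rw [dec_aaa] at this
  exact ⟨P, Relation.ReflTransGen.refl, this⟩

theorem no_conflict {w : Fin 3 → L} {P : Finset (Fin 3 → L)} (hP : IsCode flp P) {ch : List W3}
    (h1 : ∀ u ∈ ch, dec w u ∈ P) {u : W3} (hu : dec w u ∈ P) : ¬ conflict ch u = true := by
  intro h
  simp only [conflict, List.any_eq_true, Bool.and_eq_true, Bool.not_eq_true', ← Bool.not_eq_true,
    eq3_iff] at h
  obtain ⟨v, hv, hne, hd⟩ := h
  exact hd ((dec_dich w v u).1 (hP _ (h1 v hv) _ hu fun e => hne (dec_inj w e)))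

theorem win_branch {w Q ch ca} {x : W3} (h : (ca.any fun u => mem3 u x) = true)
    (h2 : ∀ u ∈ cands x, conflict ch u = true ∨ Win w Q (u :: ch) ca) : Win w Q ch ca := by
  intro P hP hPQ h3 h4
  simp only [List.any_eq_true] at h
  obtain ⟨v, hv, hvx⟩ := h
  obtain ⟨z, hz, hzx⟩ := (hPQ (pdec w x)).2 ⟨_, h4 v hv, (dec_inb w v x).2 hvx⟩
  obtain ⟨u, hu, rfl⟩ := exists_cand w x z hzx
  rcases h2 u hu with h | h
  · exact absurd h (no_conflict hP h3 hz)
  · exact h P hP hPQ (List.forall_mem_cons.2 ⟨hz, h3⟩) h4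

theorem win_branchQ {w Q ch ca} (hQ : IsCode flp Q) {x : W3}
    (h : (ch.any fun u => mem3 u x) = true)
    (h2 : ∀ u ∈ cands x, conflict ca u = true ∨ Win w Q ch (u :: ca)) : Win w Q ch ca := by
  intro P hP hPQ h3 h4
  simp only [List.any_eq_true] at h
  obtain ⟨v, hv, hvx⟩ := h
  obtain ⟨z, hz, hzx⟩ := (hPQ (pdec w x)).1 ⟨_, h3 v hv, (dec_inb w v x).2 hvx⟩
  obtain ⟨u, hu, rfl⟩ := exists_cand w x z hzx
  rcases h2 u hu with h | h
  · exact absurd h (no_conflict hQ h4 hz)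
  · exact h P hP hPQ h3 (List.forall_mem_cons.2 ⟨hz, h4⟩)

theorem dec_set3_ne (w : Fin 3 → L) (u : W3) (i : Fin 3) (l : L) (j : Fin 3) (h : j ≠ i) :
    dec w (set3 u i l) j = dec w u j := by
  simp only [dec, get3_set3_ne _ _ _ _ h]

theorem win_glue {w Q ch ca} {u : W3} {i : Fin 3} {k : Bool} (h1 : has ch u = true)
    (h2 : has ch (set3 u i (flp (get3 u i))) = true) (h3 : Win w Q (glue ch u i k) ca) :
    Win w Q ch ca := by
  intro P hP hPQ h4 h5
  have hs : GCStep flp P ((P \ {dec w u, dec w (set3 u i (flp (get3 u i)))}) ∪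
      {dec w (set3 u i (k, false)), dec w (set3 u i (k, true))}) := by
    refine ⟨_, _, _, _, i, h4 _ (has_mem h1), h4 _ (has_mem h2), ⟨?_, ?_⟩, ⟨?_, ?_⟩, ?_, rfl⟩
    · simp only [dec, get3_set3, lxor_flp, flp_flp]
    · intro j hj; rw [dec_set3_ne _ _ _ _ _ hj]
    · simp only [dec, get3_set3]
      rw [← lxor_flp]; rfl
    · intro j hj; rw [dec_set3_ne _ _ _ _ _ hj, dec_set3_ne _ _ _ _ _ hj]
    · intro j hj; rw [dec_set3_ne _ _ _ _ _ hj]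
  obtain ⟨P2, hP2, hw⟩ := h3 _ (step_code hs hP) ((step_cov hs).symm.trans hPQ) (by
    intro v hv
    simp only [glue, List.mem_cons, List.mem_filter, Bool.and_eq_true, Bool.not_eq_true',
      ← Bool.not_eq_true, eq3_iff] at hv
    rcases hv with rfl | rfl | ⟨hv, hv1, hv2⟩
    · simp
    · simp
    · have e1 : dec w v ≠ dec w u := fun e => hv1 (dec_inj w e)
      have e2 : dec w v ≠ dec w (set3 u i (flp (get3 u i))) := fun e => hv2 (dec_inj w e)
      simp [h4 v hv, e1, e2]) h5
  exact ⟨P2, Relation.ReflTransGen.head hs hP2, hw⟩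

theorem all_or {w Q} {l : List W3} {n : ℕ}
    {f : W3 → List W3} {g : W3 → List W3} {cc : List W3}
    (ih : ∀ fb ch ca, srch n fb ch ca = true → Win w Q ch ca)
    (h : (l.all fun u => conflict cc u || srch n none (f u) (g u)) = true) :
    ∀ u ∈ l, conflict cc u = true ∨ Win w Q (f u) (g u) := by
  intro u hu
  have := List.all_eq_true.1 h u hu
  rw [Bool.or_eq_true] at this
  exact this.imp id fun h => ih _ _ _ h

theorem srch_sound {w Q} (hQ : IsCode flp Q) (n : ℕ) :
    ∀ fb ch ca, srch n fb ch ca = true → Win w Q ch ca := by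
  induction n with
  | zero => intro fb ch ca h; simp [srch] at h
  | succ n ih =>
    intro fb ch ca h
    unfold srch at h
    rw [Bool.or_eq_true] at h
    rcases h with h | h
    · exact win_has h
    split at h
    · simp only [Bool.and_eq_true] at h
      exact win_glue h.1.1 h.1.2 (ih _ _ _ h.2)
    split at h
    · simp only [Bool.and_eq_true] at h
      exact win_branch h.1 (all_or (f := fun u => u :: ch) (g := fun _ => ca) ih h.2)
    split at h
    · simp only [Bool.and_eq_true] at h
      exact win_glue h.1.1 h.1.2 (ih _ _ _ h.2)
    split at h
    · split at h
      · simp at h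
      · simp only [Bool.and_eq_true] at h
        exact win_branchQ hQ h.1
          (all_or (f := fun _ => ch) (g := fun u => u :: _) ih h.2)
    · simp at h
    · split at h
      · simp only [Bool.and_eq_true] at h
        exact win_branch h.1
          (all_or (f := fun u => u :: ch) (g := fun _ => _) ih h.2)
      · simp at h

theorem key3 {P Q : Finset (Fin 3 → L)} (hP : IsCode flp P) (hQ : IsCode flp Q) (h : EqU P Q)
    {w : Fin 3 → L} (hw : w ∈ Q) : ∃ P2, GC flp P P2 ∧ w ∈ P2 :=
  srch_sound hQ 40 none [] [aaa] srch_true P hP h (by simp) (by simpa [dec_aaa] using hw)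

theorem cov_erase {d : ℕ} {V : Finset (Fin d → L)} (hV : IsCode flp V) {w : Fin d → L}
    (hw : w ∈ V) (x : Fin d → L) : Cov (V.erase w) x ↔ Cov V x ∧ ¬ Inb w x := by
  constructor
  · rintro ⟨v, hv, hvx⟩
    rw [Finset.mem_erase] at hv
    exact ⟨⟨v, hv.2, hvx⟩, fun h => hv.1 (hV.eq_of_inb hv.2 hw hvx h)⟩
  · rintro ⟨⟨v, hv, hvx⟩, h⟩
    refine ⟨v, Finset.mem_erase.2 ⟨?_, hv⟩, hvx⟩
    rintro rfl
    exact h hvx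

theorem IsCode.subset {d : ℕ} {V W : Finset (Fin d → L)} (hV : IsCode flp V) (h : W ⊆ V) :
    IsCode flp W := fun v hv w hw => hV v (h hv) w (h hw)

theorem exists_inb_self {d : ℕ} (v : Fin d → L) : ∃ x, Inb v x := by
  obtain ⟨x, hx, _⟩ := exists_inb (not_dich_self v)
  exact ⟨x, hx⟩

/-- Equivalent codes in dimension three are strongly equivalent. -/
theorem strong3 (n : ℕ) : ∀ {P Q : Finset (Fin 3 → L)}, Q.card = n → IsCode flp P → IsCode flp Q →
    EqU P Q → GC flp P Q := by
  induction n with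
  | zero =>
    intro P Q hn hP hQ h
    rw [Finset.card_eq_zero] at hn
    subst hn
    have : P = ∅ := by
      rw [Finset.eq_empty_iff_forall_notMem]
      intro v hv
      obtain ⟨x, hx⟩ := exists_inb_self v
      obtain ⟨z, hz, _⟩ := (h x).1 ⟨v, hv, hx⟩
      simp at hz
    rw [this]
    exact Relation.ReflTransGen.refl
  | succ n ih =>
    intro P Q hn hP hQ h
    obtain ⟨w, hw⟩ : Q.Nonempty := by rw [← Finset.card_pos]; omega
    obtain ⟨P2, hP2, hwP⟩ := key3 hP hQ h hw
    obtain ⟨c2, e2, -⟩ := gc_inv hP2 hP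
    have h3 := ih (P := P2.erase w) (Q := Q.erase w) (by rw [Finset.card_erase_of_mem hw]; omega)
      (c2.subset (Finset.erase_subset _ _)) (hQ.subset (Finset.erase_subset _ _)) (by
        intro x
        rw [cov_erase c2 hwP, cov_erase hQ hw, ← e2 x, h x])
    have h4 := gc_insert h3 (u := w) (by
      intro v hv
      rw [Finset.mem_erase] at hv
      exact c2 w hwP v hv.2 (Ne.symm hv.1))
    rw [Finset.insert_erase hwP, Finset.insert_erase hw] at h4
    exact hP2.trans h4

/-- the box of a word, as a finset of points -/
def bx (v : Fin 4 → L) : Finset (Fin 4 → L) := Finset.univ.filter fun x => Inb v x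

/-- the part of the box of a word in a layer -/
def lb (i : Fin 4) (e : L) (v : Fin 4 → L) : Finset (Fin 4 → L) :=
  Finset.univ.filter fun x => Inb v x ∧ x i = e

theorem mem_bx {v x : Fin 4 → L} : x ∈ bx v ↔ Inb v x :=
  Finset.mem_filter.trans (and_iff_right (Finset.mem_univ x))

theorem mem_lb {i : Fin 4} {e : L} {v x : Fin 4 → L} : x ∈ lb i e v ↔ Inb v x ∧ x i = e :=
  Finset.mem_filter.trans (and_iff_right (Finset.mem_univ x))

theorem card_bx (v : Fin 4 → L) : (bx v).card = 16 := by
  have : bx v = Fintype.piFinset fun i => Finset.univ.filter fun y => lmem (v i) y = true := by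
    ext x
    rw [mem_bx]
    simp [Inb]
  rw [this, Fintype.card_piFinset]
  have h : ∀ s : L, (Finset.univ.filter fun y => lmem s y = true).card = 2 := by decide
  simp [h]

theorem card_lb (i : Fin 4) (e : L) (v : Fin 4 → L) (hv : lmem (v i) e = true) :
    (lb i e v).card = 8 := by
  have : lb i e v = Fintype.piFinset fun j =>
      Finset.univ.filter fun y => lmem (v j) y = true ∧ (j = i → y = e) := by
    ext x
    rw [mem_lb]
    simp only [Inb, Finset.mem_filter, Finset.mem_univ, true_and, Fintype.mem_piFinset]
    constructor
    · rintro ⟨h1, h2⟩ j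
      exact ⟨h1 j, fun h => h ▸ h2⟩
    · intro h
      exact ⟨fun j => (h j).1, (h i).2 rfl⟩
  rw [this, Fintype.card_piFinset]
  have h : ∀ s : L, (Finset.univ.filter fun y => lmem s y = true).card = 2 := by decide
  have h2 : ∀ j, (Finset.univ.filter fun y => lmem (v j) y = true ∧ (j = i → y = e)).card =
      if j = i then 1 else 2 := by
    intro j
    split_ifs with hj
    · subst hj
      rw [Finset.card_eq_one]
      refine ⟨e, ?_⟩
      ext y
      simp only [Finset.mem_filter, Finset.mem_univ, true_and, Finset.mem_singleton, forall_const]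
      constructor
      · exact fun h => h.2
      · rintro rfl
        exact ⟨hv, rfl⟩
    · simp [hj, h]
  rw [Finset.prod_congr rfl fun j _ => h2 j]
  revert i
  intro i _ _ _
  clear * -
  revert i
  decide

theorem card_layer (i : Fin 4) (e : L) :
    (Finset.univ.filter fun x : Fin 4 → L => x i = e).card = 64 := by
  have : (Finset.univ.filter fun x : Fin 4 → L => x i = e) = Fintype.piFinset fun j =>
      Finset.univ.filter fun y => (j = i → y = e) := by
    ext x
    simp only [Finset.mem_filter, Finset.mem_univ, true_and, Fintype.mem_piFinset]
    constructor
    · rintro h2 j h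
      exact h ▸ h2
    · intro h
      exact h i rfl
  rw [this, Fintype.card_piFinset]
  revert i e
  decide

theorem layer_count {V : Finset (Fin 4 → L)} (hV : IsCode flp V) (i : Fin 4) (e : L) :
    (V.filter fun v => lmem (v i) e = true).card ≤ 8 ∧
    ((V.filter fun v => lmem (v i) e = true).card = 8 → ∀ x, x i = e → Cov V x) := by
  have hc : ((V.filter fun v => lmem (v i) e = true).biUnion (lb i e)).card =
      8 * (V.filter fun v => lmem (v i) e = true).card := by
    rw [Finset.card_biUnion]
    · rw [Finset.sum_congr rfl fun v hv => card_lb i e v (Finset.mem_filter.1 hv).2]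
      simp [mul_comm]
    · intro v hv w hw hvw
      rw [Function.onFun, Finset.disjoint_left]
      intro x hx hx'
      rw [mem_lb] at hx hx'
      exact hvw (hV.eq_of_inb (Finset.mem_filter.1 (Finset.mem_coe.1 hv)).1
        (Finset.mem_filter.1 (Finset.mem_coe.1 hw)).1 hx.1 hx'.1)
  have hs : (V.filter fun v => lmem (v i) e = true).biUnion (lb i e) ⊆
      Finset.univ.filter fun x : Fin 4 → L => x i = e := by
    intro x hx
    simp only [Finset.mem_biUnion, mem_lb, Finset.mem_filter, Finset.mem_univ, true_and] at hx ⊢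
    obtain ⟨_, _, _, h⟩ := hx
    exact h
  have hl := Finset.card_le_card hs
  rw [hc, card_layer] at hl
  refine ⟨by omega, fun h8 x hx => ?_⟩
  have := Finset.eq_of_subset_of_card_le hs (by rw [hc, card_layer, h8])
  have hx2 : x ∈ Finset.univ.filter fun x : Fin 4 → L => x i = e := by simp [hx]
  rw [← this] at hx2
  simp only [Finset.mem_biUnion, mem_lb, Finset.mem_filter, Finset.mem_univ, true_and] at hx2
  obtain ⟨v, hv, hvx, _⟩ := hx2
  exact ⟨v, hv.1, hvx⟩

theorem lmem_not : ∀ s e : L, lmem s (!e.1, !e.2) = true ↔ ¬ lmem s e = true := by decide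

theorem full_or {V : Finset (Fin 4 → L)} (hV : IsCode flp V) (h15 : V.card = 15) (i : Fin 4)
    (e : L) : (∀ x, x i = e → Cov V x) ∨ (∀ x, x i = (!e.1, !e.2) → Cov V x) := by
  obtain ⟨h1, h2⟩ := layer_count hV i e
  obtain ⟨h3, h4⟩ := layer_count hV i (!e.1, !e.2)
  have hh : (V.filter fun v => lmem (v i) (!e.1, !e.2) = true) =
      V.filter fun v => ¬ lmem (v i) e = true := by
    apply Finset.filter_congr
    intro v _
    exact lmem_not (v i) e
  have h5 := Finset.card_filter_add_card_filter_not (s := V) (fun v => lmem (v i) e = true)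
  rw [← hh, h15] at h5
  by_cases h : (V.filter fun v => lmem (v i) e = true).card = 8
  · exact Or.inl (h2 h)
  · exact Or.inr (h4 (by omega))

theorem hole_letter {V : Finset (Fin 4 → L)} (hV : IsCode flp V) (h15 : V.card = 15) (i : Fin 4) :
    ∃ s : L, ∀ x, ¬ Cov V x → lmem s (x i) = true := by
  have e : ∀ l : L, l = (false, false) ∨ l = (true, true) ∨ l = (false, true) ∨ l = (true, false) := by
    decide
  rcases full_or hV h15 i (false, false) with h1 | h1 <;>
  rcases full_or hV h15 i (false, true) with h2 | h2
  · refine ⟨(false, true), fun x hx => ?_⟩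
    rcases e (x i) with h | h | h | h <;>
      first | exact absurd (h1 x h) hx | exact absurd (h2 x h) hx | (rw [h]; rfl)
  · refine ⟨(true, true), fun x hx => ?_⟩
    rcases e (x i) with h | h | h | h <;>
      first | exact absurd (h1 x h) hx | exact absurd (h2 x h) hx | (rw [h]; rfl)
  · refine ⟨(true, false), fun x hx => ?_⟩
    rcases e (x i) with h | h | h | h <;>
      first | exact absurd (h1 x h) hx | exact absurd (h2 x h) hx | (rw [h]; rfl)
  · refine ⟨(false, false), fun x hx => ?_⟩
    rcases e (x i) with h | h | h | h <;>
      first | exact absurd (h1 x h) hx | exact absurd (h2 x h) hx | (rw [h]; rfl)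

theorem exists_hole {V : Finset (Fin 4 → L)} (hV : IsCode flp V) (h15 : V.card = 15) :
    ∃ s : Fin 4 → L, ∀ x, Inb s x ↔ ¬ Cov V x := by
  choose s hs using hole_letter hV h15
  refine ⟨s, ?_⟩
  have hc : (V.biUnion bx).card = 240 := by
    rw [Finset.card_biUnion]
    · rw [Finset.sum_congr rfl fun v _ => card_bx v]
      simp [h15]
    · intro v hv w hw hvw
      rw [Function.onFun, Finset.disjoint_left]
      intro x hx hx'
      rw [mem_bx] at hx hx'
      exact hvw (hV.eq_of_inb hv hw hx hx')
  have hm : ∀ x, x ∈ V.biUnion bx ↔ Cov V x := by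
    intro x
    simp [mem_bx, Cov]
  have hcc : (V.biUnion bx)ᶜ.card = 16 := by
    rw [Finset.card_compl, hc]
    simp
  have hsub : (V.biUnion bx)ᶜ ⊆ bx s := by
    intro x hx
    rw [Finset.mem_compl, hm] at hx
    rw [mem_bx]
    exact fun i => hs i x hx
  have := Finset.eq_of_subset_of_card_le hsub (by rw [hcc, card_bx])
  intro x
  rw [← hm, ← Finset.mem_compl, this, mem_bx]

/-- prepend a letter -/
def cns (k : L) (u : Fin 3 → L) : Fin 4 → L := Fin.cons k u
/-- drop the first letter -/
def tl (z : Fin 4 → L) : Fin 3 → L := fun i => z i.succ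

theorem cns_zero (k : L) (u : Fin 3 → L) : cns k u 0 = k := rfl
theorem cns_succ (k : L) (u : Fin 3 → L) (i : Fin 3) : cns k u i.succ = u i := rfl
theorem tl_cns (k : L) (u : Fin 3 → L) : tl (cns k u) = u := rfl
theorem cns_tl (z : Fin 4 → L) : cns (z 0) (tl z) = z := Fin.cons_self_tail z

theorem inb_cns (k : L) (u : Fin 3 → L) (p : L) (y : Fin 3 → L) :
    Inb (cns k u) (cns p y) ↔ lmem k p = true ∧ Inb u y := by
  constructor
  · intro h
    exact ⟨h 0, fun i => h i.succ⟩
  · rintro ⟨h1, h2⟩ i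
    refine Fin.cases h1 (fun i => h2 i) i

theorem dich_cns {k m : L} {u v : Fin 3 → L} (h : Dich flp (cns k u) (cns m v)) :
    k = flp m ∨ Dich flp u v := by
  obtain ⟨i, hi⟩ := h
  revert hi
  refine Fin.cases (fun h => Or.inl h) (fun i h => Or.inr ⟨i, h⟩) i

def lay (k : L) (R : Finset (Fin 3 → L)) : Finset (Fin 4 → L) := R.image (cns k)
def sect (k : L) (V : Finset (Fin 4 → L)) : Finset (Fin 3 → L) :=
  Finset.univ.filter fun u => cns k u ∈ V

theorem mem_lay {k : L} {R : Finset (Fin 3 → L)} {z : Fin 4 → L} :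
    z ∈ lay k R ↔ z 0 = k ∧ tl z ∈ R := by
  simp only [lay, Finset.mem_image]
  constructor
  · rintro ⟨u, hu, rfl⟩
    exact ⟨rfl, hu⟩
  · rintro ⟨rfl, h⟩
    exact ⟨tl z, h, cns_tl z⟩

theorem mem_sect {k : L} {V : Finset (Fin 4 → L)} {u : Fin 3 → L} :
    u ∈ sect k V ↔ cns k u ∈ V := by simp [sect]

theorem sect_code {T : Finset (Fin 4 → L)} (hT : IsCode flp T) (k : L) :
    IsCode flp (sect k T) := by
  intro u hu v hv huv
  rw [mem_sect] at hu hv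
  rcases dich_cns (hT _ hu _ hv fun h => huv (by rw [← tl_cns k u, h, tl_cns])) with h | h
  · exact absurd h.symm (flp_ne k)
  · exact h

/-- a letter of the other kind -/
def oth (k : L) : L := (!k.1, k.2)

theorem letters (k l : L) : l = k ∨ l = flp k ∨ l = oth k ∨ l = flp (oth k) := by
  revert k l; decide
theorem pt_both (k m : L) (h : m = oth k ∨ m = flp (oth k)) :
    ∃ x, lmem k x = true ∧ lmem m x = true ∧ ∀ l, lmem l x = true → l = k ∨ l = m := by
  revert k m; decide
theorem oth_ne (k : L) : oth k ≠ k ∧ oth k ≠ flp k ∧ flp (oth k) ≠ k ∧ flp (oth k) ≠ flp k ∧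
    k ≠ flp (oth k) := by
  revert k; decide
theorem oth_flp (k : L) : oth (flp k) = flp (oth k) := by revert k; decide

theorem layer_cov {T : Finset (Fin 4 → L)} (hT : IsCode flp T) (hf : ∀ x, Cov T x) (k : L)
    (y : Fin 3 → L) (h : Cov (sect k T) y) : Cov (sect (flp k) T) y := by
  obtain ⟨u, hu, huy⟩ := h
  rw [mem_sect] at hu
  obtain ⟨p, hp1, hp2, hp3⟩ := pt_both (flp k) (oth k)
    (Or.inr (by rw [oth_flp, flp_flp]))
  obtain ⟨r, hr1, hr2, -⟩ := pt_both k (oth k) (Or.inl rfl)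
  obtain ⟨t, ht, htx⟩ := hf (cns p y)
  rw [← cns_tl t] at ht htx
  rw [inb_cns] at htx
  rcases hp3 _ htx.1 with h | h
  · rw [h] at ht
    exact ⟨tl t, mem_sect.2 ht, htx.2⟩
  · rw [h] at ht
    have := hT.eq_of_inb ht hu ((inb_cns _ _ r y).2 ⟨hr2, htx.2⟩) ((inb_cns _ _ r y).2 ⟨hr1, huy⟩)
    exact absurd (congrFun this 0) (oth_ne k).1

theorem layer_eqU {T : Finset (Fin 4 → L)} (hT : IsCode flp T) (hf : ∀ x, Cov T x) (k : L) :
    EqU (sect (flp k) T) (sect k T) := fun y =>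
  ⟨fun h => by have := layer_cov hT hf _ y h; rwa [flp_flp] at this, layer_cov hT hf k y⟩

theorem twin_cns {v w : Fin 3 → L} {i : Fin 3} (k : L) (h : TwinPair flp v w i) :
    TwinPair flp (cns k v) (cns k w) i.succ := by
  refine ⟨h.1, fun j => ?_⟩
  refine Fin.cases (fun _ => rfl) (fun j hj => ?_) j
  exact h.2 j fun e => hj (by rw [e])

theorem gc_lift {P Q : Finset (Fin 3 → L)} (h : GC flp P Q) (k : L) (X : Finset (Fin 4 → L))
    (hX : ∀ x ∈ X, x 0 ≠ k) : GC flp (X ∪ lay k P) (X ∪ lay k Q) := by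
  induction h with
  | refl => exact Relation.ReflTransGen.refl
  | tail _ hs ih =>
    refine ih.tail ?_
    obtain ⟨v, w, q, t, i, hv, hw, h1, h2, h3, rfl⟩ := hs
    refine ⟨cns k v, cns k w, cns k q, cns k t, i.succ, ?_, ?_, twin_cns k h1, twin_cns k h2, ?_, ?_⟩
    · exact Finset.mem_union_right _ (mem_lay.2 ⟨rfl, hv⟩)
    · exact Finset.mem_union_right _ (mem_lay.2 ⟨rfl, hw⟩)
    · intro j
      refine Fin.cases (fun _ => rfl) (fun j hj => ?_) j
      exact h3 j fun e => hj (by rw [e])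
    · have e : ∀ (z : Fin 4 → L) (u : Fin 3 → L), z = cns k u ↔ z 0 = k ∧ tl z = u := by
        intro z u
        constructor
        · rintro rfl
          exact ⟨rfl, rfl⟩
        · rintro ⟨rfl, rfl⟩
          exact (cns_tl z).symm
      ext z
      have hz := hX z
      simp only [Finset.mem_union, Finset.mem_sdiff, Finset.mem_insert, Finset.mem_singleton,
        mem_lay, e]
      tauto

theorem lay_insert (k : L) (u : Fin 3 → L) (B : Finset (Fin 3 → L)) :
    lay k (insert u B) = insert (cns k u) (lay k B) := by
  simp [lay]

theorem gc_move (a : L) (B : Finset (Fin 3 → L)) :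
    ∀ X : Finset (Fin 4 → L), (∀ x ∈ X, x 0 ≠ oth a ∧ x 0 ≠ flp (oth a)) →
    GC flp (X ∪ (lay (oth a) B ∪ lay (flp (oth a)) B)) (X ∪ (lay a B ∪ lay (flp a) B)) := by
  induction B using Finset.induction_on with
  | empty =>
    intro X _
    have : ∀ k, lay k ∅ = ∅ := fun k => rfl
    simp only [this]
    exact Relation.ReflTransGen.refl
  | insert u B hu ih =>
    intro X hX
    obtain ⟨o1, o2, o3, o4, -⟩ := oth_ne a
    have h1 := ih (X ∪ {cns a u, cns (flp a) u}) (by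
      intro x hx
      simp only [Finset.mem_union, Finset.mem_insert, Finset.mem_singleton] at hx
      rcases hx with h | rfl | rfl
      · exact hX x h
      · exact ⟨o1.symm, o3.symm⟩
      · exact ⟨o2.symm, o4.symm⟩)
    have e2 : X ∪ {cns a u, cns (flp a) u} ∪ (lay a B ∪ lay (flp a) B) =
        X ∪ (lay a (insert u B) ∪ lay (flp a) (insert u B)) := by
      rw [lay_insert, lay_insert]
      ext z
      simp only [Finset.mem_union, Finset.mem_insert, Finset.mem_singleton]
      tauto
    rw [e2] at h1
    refine Relation.ReflTransGen.head ?_ h1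
    have n1 : ∀ k m, cns k u ∉ lay m B := fun k m h => hu (mem_lay.1 h).2
    have n2 : cns (oth a) u ∉ X := fun h => (hX _ h).1 rfl
    have n3 : cns (flp (oth a)) u ∉ X := fun h => (hX _ h).2 rfl
    have tw : ∀ k, TwinPair flp (cns k u) (cns (flp k) u) 0 := by
      intro k
      refine ⟨(flp_flp k).symm, fun j => ?_⟩
      exact Fin.cases (fun h => absurd rfl h) (fun j _ => rfl) j
    refine ⟨cns (oth a) u, cns (flp (oth a)) u, cns a u, cns (flp a) u, 0, ?_, ?_, tw _, tw _, ?_, ?_⟩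
    · simp [lay_insert]
    · simp [lay_insert]
    · intro j
      exact Fin.cases (fun h => absurd rfl h) (fun j _ => rfl) j
    · rw [lay_insert, lay_insert]
      ext z
      by_cases z1 : z = cns (oth a) u
      · subst z1
        simp [n1, n2]
      · by_cases z2 : z = cns (flp (oth a)) u
        · subst z2
          simp [n1, n3]
        · simp only [Finset.mem_union, Finset.mem_sdiff, Finset.mem_insert, Finset.mem_singleton,
            z1, z2]
          tauto

theorem normal_form {V : Finset (Fin 4 → L)} (hV : IsCode flp V) {s : Fin 4 → L}
    (hs : ∀ x, Inb s x ↔ ¬ Cov V x) :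
    ∃ R : Finset (Fin 3 → L), IsCode flp R ∧ (∀ y, Cov R y) ∧ tl s ∈ R ∧
      GC flp V (lay (s 0) (R.erase (tl s)) ∪ lay (flp (s 0)) R) := by
  obtain ⟨o1, o2, o3, o4, o5⟩ := oth_ne (s 0)
  have hsd : ∀ v ∈ V, Dich flp s v := by
    intro v hv
    by_contra h
    obtain ⟨x, h1, h2⟩ := exists_inb h
    exact (hs x).1 h1 ⟨v, hv, h2⟩
  have hsV : s ∉ V := fun h => not_dich_self s (hsd s h)
  set T := insert s V with hTdef
  have hT : IsCode flp T := by
    intro v hv w hw hvw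
    rw [hTdef, Finset.mem_insert] at hv hw
    rcases hv with rfl | hv <;> rcases hw with rfl | hw
    · exact absurd rfl hvw
    · exact hsd w hw
    · exact dich_symm (hsd v hv)
    · exact hV v hv w hw hvw
  have hf : ∀ x, Cov T x := by
    intro x
    by_cases h : Cov V x
    · obtain ⟨v, hv, hx⟩ := h
      exact ⟨v, Finset.mem_insert_of_mem hv, hx⟩
    · exact ⟨s, Finset.mem_insert_self _ _, (hs x).2 h⟩
  have hsA : tl s ∈ sect (s 0) T := by
    rw [mem_sect, cns_tl]; exact Finset.mem_insert_self _ _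
  have hAB : ∀ u ∈ sect (s 0) T, ∀ v ∈ sect (oth (s 0)) T, Dich flp u v := by
    intro u hu v hv
    rw [mem_sect] at hu hv
    rcases dich_cns (hT _ hu _ hv fun h => o1 (congrFun h 0).symm) with h | h
    · exact absurd h o5
    · exact h
  have hsB : tl s ∉ sect (oth (s 0)) T := fun h => not_dich_self _ (hAB _ hsA _ h)
  have gA := strong3 _ rfl (sect_code hT (flp (s 0))) (sect_code hT (s 0)) (layer_eqU hT hf (s 0))
  have gB := strong3 _ rfl (sect_code hT (flp (oth (s 0)))) (sect_code hT (oth (s 0)))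
    (layer_eqU hT hf (oth (s 0)))
  have hVeq : V = (lay (s 0) ((sect (s 0) T).erase (tl s)) ∪ lay (oth (s 0)) (sect (oth (s 0)) T) ∪
      lay (flp (oth (s 0))) (sect (flp (oth (s 0))) T)) ∪ lay (flp (s 0)) (sect (flp (s 0)) T) := by
    ext z
    have hz : ∀ k, z 0 = k → (tl z ∈ sect k T ↔ (z = s ∨ z ∈ V)) := by
      rintro k rfl
      rw [mem_sect, cns_tl, hTdef, Finset.mem_insert]
    have hts : z 0 = s 0 → (tl z = tl s ↔ z = s) := by
      intro h
      constructor
      · intro h2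
        rw [← cns_tl z, h, h2, cns_tl]
      · rintro rfl
        rfl
    simp only [Finset.mem_union, mem_lay, Finset.mem_erase]
    constructor
    · intro h
      have hzs : z ≠ s := fun e => hsV (e ▸ h)
      rcases letters (s 0) (z 0) with h0 | h0 | h0 | h0
      · exact Or.inl (Or.inl (Or.inl ⟨h0, fun e => hzs ((hts h0).1 e), (hz _ h0).2 (Or.inr h)⟩))
      · exact Or.inr ⟨h0, (hz _ h0).2 (Or.inr h)⟩
      · exact Or.inl (Or.inl (Or.inr ⟨h0, (hz _ h0).2 (Or.inr h)⟩))
      · exact Or.inl (Or.inr ⟨h0, (hz _ h0).2 (Or.inr h)⟩)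
    · rintro (((⟨h0, h1, h2⟩ | ⟨h0, h2⟩) | ⟨h0, h2⟩) | ⟨h0, h2⟩)
      · rcases (hz _ h0).1 h2 with h | h
        · exact absurd ((hts h0).2 h) h1
        · exact h
      · rcases (hz _ h0).1 h2 with h | h
        · rw [h] at h0; exact absurd h0.symm o1
        · exact h
      · rcases (hz _ h0).1 h2 with h | h
        · rw [h] at h0; exact absurd h0.symm o3
        · exact h
      · rcases (hz _ h0).1 h2 with h | h
        · rw [h] at h0; exact absurd h0.symm (flp_ne _)
        · exact h
  refine ⟨sect (s 0) T ∪ sect (oth (s 0)) T, ?_, ?_, Finset.mem_union_left _ hsA, ?_⟩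
  · intro u hu v hv huv
    rw [Finset.mem_union] at hu hv
    rcases hu with hu | hu <;> rcases hv with hv | hv
    · exact sect_code hT _ u hu v hv huv
    · exact hAB u hu v hv
    · exact dich_symm (hAB v hv u hu)
    · exact sect_code hT _ u hu v hv huv
  · intro y
    obtain ⟨p, hp1, hp2, hp3⟩ := pt_both (s 0) (oth (s 0)) (Or.inl rfl)
    obtain ⟨t, ht, htx⟩ := hf (cns p y)
    rw [← cns_tl t] at ht htx
    rw [inb_cns] at htx
    rcases hp3 _ htx.1 with h | h
    · rw [h] at ht
      exact ⟨tl t, Finset.mem_union_left _ (mem_sect.2 ht), htx.2⟩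
    · rw [h] at ht
      exact ⟨tl t, Finset.mem_union_right _ (mem_sect.2 ht), htx.2⟩
  · generalize sect (s 0) T = A at *
    generalize sect (oth (s 0)) T = B at *
    generalize sect (flp (s 0)) T = A2 at *
    generalize sect (flp (oth (s 0))) T = B2 at *
    have g1 := gc_lift gA (flp (s 0)) (lay (s 0) (A.erase (tl s)) ∪ lay (oth (s 0)) B ∪
      lay (flp (oth (s 0))) B2) (by
        intro x hx
        simp only [Finset.mem_union, mem_lay] at hx
        rcases hx with (h | h) | h <;> rw [h.1]
        · exact (flp_ne _).symm
        · exact o2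
        · exact o4)
    rw [← hVeq] at g1
    have g2 := gc_lift gB (flp (oth (s 0))) (lay (s 0) (A.erase (tl s)) ∪ lay (oth (s 0)) B ∪
      lay (flp (s 0)) A) (by
        intro x hx
        simp only [Finset.mem_union, mem_lay] at hx
        rcases hx with (h | h) | h <;> rw [h.1]
        · exact o5
        · exact (flp_ne _).symm
        · exact o4.symm)
    have g3 := gc_move (s 0) B (lay (s 0) (A.erase (tl s)) ∪ lay (flp (s 0)) A) (by
        intro x hx
        simp only [Finset.mem_union, mem_lay] at hx
        rcases hx with h | h <;> rw [h.1]
        · exact ⟨o1.symm, o3.symm⟩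
        · exact ⟨o2.symm, o4.symm⟩)
    have e1 : lay (s 0) (A.erase (tl s)) ∪ lay (oth (s 0)) B ∪ lay (flp (oth (s 0))) B2 ∪
        lay (flp (s 0)) A = lay (s 0) (A.erase (tl s)) ∪ lay (oth (s 0)) B ∪
        lay (flp (s 0)) A ∪ lay (flp (oth (s 0))) B2 := by
      rw [Finset.union_right_comm]
    have e2 : lay (s 0) (A.erase (tl s)) ∪ lay (oth (s 0)) B ∪
        lay (flp (s 0)) A ∪ lay (flp (oth (s 0))) B =
        (lay (s 0) (A.erase (tl s)) ∪ lay (flp (s 0)) A) ∪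
          (lay (oth (s 0)) B ∪ lay (flp (oth (s 0))) B) := by
      ext z
      simp only [Finset.mem_union]
      tauto
    have e3 : (lay (s 0) (A.erase (tl s)) ∪ lay (flp (s 0)) A) ∪
          (lay (s 0) B ∪ lay (flp (s 0)) B) =
        lay (s 0) ((A ∪ B).erase (tl s)) ∪ lay (flp (s 0)) (A ∪ B) := by
      ext z
      have : tl z ∈ B → tl z ≠ tl s := fun h e => hsB (e ▸ h)
      simp only [Finset.mem_union, mem_lay, Finset.mem_erase]
      tauto
    rw [e1] at g1
    rw [e2] at g2
    rw [e3] at g3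
    exact (g1.trans g2).trans g3

theorem main_concrete {V W : Finset (Fin 4 → L)} (hV : IsCode flp V) (hW : IsCode flp W)
    (h : EqU V W) (h15 : V.card = 15) : GC flp V W := by
  obtain ⟨s, hs⟩ := exists_hole hV h15
  obtain ⟨R, r1, r2, r3, r4⟩ := normal_form hV hs
  obtain ⟨Q, q1, q2, q3, q4⟩ := normal_form hW (s := s) (fun x => by rw [hs x, h x])
  have q5 := (gc_inv q4 hW).2.2
  have g1 : GC flp R Q := strong3 _ rfl r1 q1 fun y => ⟨fun _ => q2 y, fun _ => r2 y⟩
  have g2 : GC flp (R.erase (tl s)) (Q.erase (tl s)) :=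
    strong3 _ rfl (r1.subset (Finset.erase_subset _ _)) (q1.subset (Finset.erase_subset _ _))
      fun y => by
        rw [cov_erase r1 r3, cov_erase q1 q3]
        simp [r2 y, q2 y]
  have k1 := gc_lift g1 (flp (s 0)) (lay (s 0) (R.erase (tl s))) (by
    intro x hx
    rw [(mem_lay.1 hx).1]
    exact (flp_ne _).symm)
  have k2 := gc_lift g2 (s 0) (lay (flp (s 0)) Q) (by
    intro x hx
    rw [(mem_lay.1 hx).1]
    exact flp_ne _)
  rw [Finset.union_comm, Finset.union_comm _ (lay (s 0) (Q.erase (tl s)))] at k2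
  exact ((r4.trans k1).trans k2).trans q5

theorem exists_coding {S : Type} [Fintype S] [DecidableEq S] (c : S → S)
    (hc : ∀ s, c (c s) = s) (hc' : ∀ s, c s ≠ s) (hcard : Fintype.card S = 4) :
    ∃ e : L ≃ S, ∀ l, e (flp l) = c (e l) := by
  have hne : Nonempty S := Fintype.card_pos_iff.1 (by omega)
  obtain ⟨a⟩ := hne
  obtain ⟨b, hb⟩ : ∃ b, b ∉ ({a, c a} : Finset S) := by
    by_contra h
    push Not at h
    have h1 : (Finset.univ : Finset S) ⊆ {a, c a} := fun x _ => h x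
    have h2 := Finset.card_le_card h1
    have h3 : ({a, c a} : Finset S).card ≤ 2 := Finset.card_le_two
    rw [Finset.card_univ] at h2
    omega
  simp only [Finset.mem_insert, Finset.mem_singleton, not_or] at hb
  obtain ⟨hb1, hb2⟩ := hb
  have hb3 : c b ≠ a := fun h => hb2 (by rw [← h, hc])
  have hb4 : c b ≠ c a := fun h => hb1 (by rw [← hc b, h, hc])
  let g : L → S := fun l => match l with
    | (false, false) => a
    | (false, true) => c a
    | (true, false) => b
    | (true, true) => c b
  have hinj : Function.Injective g := by
    have ha := hc' a
    have hbb := hc' b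
    rintro ⟨_ | _, _ | _⟩ ⟨_ | _, _ | _⟩ h <;> simp only [g] at h <;>
      first
      | rfl
      | exact absurd h (by assumption)
      | exact absurd h.symm (by assumption)
  have hbij : Function.Bijective g := by
    rw [Fintype.bijective_iff_injective_and_card]
    exact ⟨hinj, by rw [hcard]; rfl⟩
  refine ⟨Equiv.ofBijective g hbij, ?_⟩
  rintro ⟨_ | _, _ | _⟩ <;> simp [flp, g, hc]

theorem gc_transport {S : Type} [Fintype S] [DecidableEq S] {c : S → S} (e : L ≃ S)
    (he : ∀ l, e (flp l) = c (e l)) {d : ℕ} {V W : Finset (Fin d → L)} (h : GC flp V W) :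
    GC c (V.image fun v i => e (v i)) (W.image fun v i => e (v i)) := by
  have hinj : Function.Injective (fun (v : Fin d → L) i => e (v i)) := by
    intro v w h
    funext i
    exact e.injective (congrFun h i)
  induction h with
  | refl => exact Relation.ReflTransGen.refl
  | tail _ hs ih =>
    refine ih.tail ?_
    obtain ⟨v, w, q, t, i, hv, hw, h1, h2, h3, rfl⟩ := hs
    refine ⟨_, _, fun i => e (q i), fun i => e (t i), i, Finset.mem_image_of_mem _ hv,
      Finset.mem_image_of_mem _ hw, ⟨?_, ?_⟩, ⟨?_, ?_⟩, ?_, ?_⟩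
    · simp only [h1.1, he]
    · intro j hj; simp only [h1.2 j hj]
    · simp only [h2.1, he]
    · intro j hj; simp only [h2.2 j hj]
    · intro j hj; simp only [h3 j hj]
    · rw [Finset.image_union, Finset.image_sdiff _ _ hinj]
      simp [Finset.image_insert]

theorem cov_of_covered {S : Type} [Fintype S] [DecidableEq S] {c : S → S} (e : L ≃ S)
    (he : ∀ l, e (flp l) = c (e l)) {V W : Finset (Fin 4 → S)} (h : Covered c V W)
    (x : Fin 4 → L) (hx : Cov (V.image fun v i => e.symm (v i)) x) :
    Cov (W.image fun v i => e.symm (v i)) x := by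
  obtain ⟨v, hv, hvx⟩ := hx
  rw [Finset.mem_image] at hv
  obtain ⟨v, hv, rfl⟩ := hv
  have hr : IsRealization c (fun _ : Fin 4 => L) (fun _ s => {p | lmem (e.symm s) p = true}) := by
    intro i s
    obtain ⟨l, rfl⟩ := e.surjective s
    have h1 : ∃ p, lmem l p = true := by revert l; decide
    have h2 : ∃ p, ¬ lmem l p = true := by revert l; decide
    refine ⟨?_, ?_, ?_⟩
    · simpa [Set.Nonempty] using h1
    · rw [Set.ne_univ_iff_exists_notMem]
      simpa using h2
    · ext p
      rw [← he]
      simp [lmem_flp]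
  have := h v hv _ _ hr (show x ∈ box _ v from hvx)
  simp only [Set.mem_iUnion] at this
  obtain ⟨w, hw, hwx⟩ := this
  exact ⟨_, Finset.mem_image_of_mem _ hw, hwx⟩

/-- Corollary "w15" of the paper. -/
theorem equivalent_15_word_codes_dim4_strongly_equivalent
    {S : Type} [Fintype S] [DecidableEq S] (c : S → S)
    (hc : ∀ s, c (c s) = s) (hc' : ∀ s, c s ≠ s)
    (hcard : Fintype.card S = 4)
    (V W : Finset (Fin 4 → S)) (hV : IsCode c V) (hW : IsCode c W)
    (heq : Equivalent c V W) (hV15 : V.card = 15) :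
    GC c V W := by
  obtain ⟨e, he⟩ := exists_coding c hc hc' hcard
  have he2 : ∀ s, e.symm (c s) = flp (e.symm s) := fun s => by
    rw [Equiv.symm_apply_eq, he, Equiv.apply_symm_apply]
  have hcode : ∀ U : Finset (Fin 4 → S), IsCode c U →
      IsCode flp (U.image fun v i => e.symm (v i)) := by
    intro U hU v hv w hw hvw
    rw [Finset.mem_image] at hv hw
    obtain ⟨v, hv, rfl⟩ := hv
    obtain ⟨w, hw, rfl⟩ := hw
    obtain ⟨i, hi⟩ := hU v hv w hw (by rintro rfl; exact hvw rfl)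
    exact ⟨i, by simp only [hi, he2]⟩
  have hinj : Function.Injective (fun (v : Fin 4 → S) i => e.symm (v i)) := by
    intro v w h
    funext i
    exact e.symm.injective (congrFun h i)
  have hmain := main_concrete (hcode V hV) (hcode W hW)
    (fun x => ⟨cov_of_covered e he heq.1 x, cov_of_covered e he heq.2 x⟩)
    (by rw [Finset.card_image_of_injective _ hinj, hV15])
  have h2 := gc_transport e he hmain
  have hid : ∀ U : Finset (Fin 4 → S),
      (U.image fun v i => e.symm (v i)).image (fun v i => e (v i)) = U := by
    intro U
    have hcomp : ((fun (v : Fin 4 → L) i => e (v i)) ∘ fun (v : Fin 4 → S) i => e.symm (v i)) =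
        id := by
      funext v i
      simp
    rw [Finset.image_image, hcomp, Finset.image_id]
  rwa [hid, hid] at h2

end PolyboxPaper
end
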